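/- arXiv:1911.04546 — 3 statements merged into one kernel-verified Lean document; each statement's English description precedes it below -/
import Mathlib

section
/- Let G be a graph, let u be a vertex of G, and let v be a neighbor of u. Let D' be a path decomposition of G − uv. If the number of paths of D' ending at v is strictly greater than the number of neighbors w of u in G − uv with D'(w) = 0, then G admits a path decomposition D with |D| = |D'|, D(u) = D'(u) + 1, D(v) = D'(v) − 1, and D(x) = D'(x) for all other vertices x. -/
open SimpleGraph

variable {V : Type*}

/-- A path decomposition of a simple graph `G`: a list of nontrivial paths of `G`
that are pairwise edge-disjoint and together cover every edge of `G`. -/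
structure PathDecomp (G : SimpleGraph V) where
  paths : List (Σ a b : V, G.Walk a b)
  nontrivial : ∀ p ∈ paths, 0 < p.2.2.length
  isPath : ∀ p ∈ paths, p.2.2.IsPath
  edgeDisjoint : paths.Pairwise fun p q => ∀ e, e ∈ p.2.2.edges → e ∉ q.2.2.edges
  covers : ∀ e ∈ G.edgeSet, ∃ p ∈ paths, e ∈ p.2.2.edges

/-- Cardinality of a path decomposition. -/
def pdCard {G : SimpleGraph V} (D : PathDecomp G) : ℕ := D.paths.length

/-- `ends D u` is the number of paths in `D` having `u` as an end vertex. -/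
def ends [DecidableEq V] {G : SimpleGraph V} (D : PathDecomp G) (u : V) : ℕ :=
  (D.paths.filter fun p => p.1 = u ∨ p.2.1 = u).length

/-- The path number: minimum cardinality of a path decomposition. -/
noncomputable def pn (G : SimpleGraph V) : ℕ :=
  sInf {n | ∃ D : PathDecomp G, pdCard D = n}

/-- Degree as the `ncard` of the neighbor set (no decidability needed). -/
noncomputable def ndeg (G : SimpleGraph V) (v : V) : ℕ := {w | G.Adj v w}.ncard

/-- A SET graph: the set of even-degree vertices consists of exactly three
mutually adjacent vertices, and every odd-degree vertex has at least two
even-degree neighbors. -/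
def IsSETGraph (G : SimpleGraph V) : Prop :=
  (∃ a b c : V, a ≠ b ∧ a ≠ c ∧ b ≠ c ∧
      {v : V | Even (ndeg G v)} = {a, b, c} ∧
      G.Adj a b ∧ G.Adj a c ∧ G.Adj b c) ∧
  ∀ v : V, Odd (ndeg G v) →
    ∃ w₁ w₂ : V, w₁ ≠ w₂ ∧ G.Adj v w₁ ∧ G.Adj v w₂ ∧
      Even (ndeg G w₁) ∧ Even (ndeg G w₂)

namespace FanAddible

/-- The edges joining consecutive vertices of a list. -/
def listEdges : List V → List (Sym2 V)
  | [] => []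
  | [_] => []
  | a :: b :: l => s(a, b) :: listEdges (b :: l)

/-- The first and the last vertex of a list. -/
def listEnds (l : List V) : List V := l.head?.toList ++ l.getLast?.toList

/-- Every list in `L` is the vertex sequence of a nontrivial path of `G`. -/
def ArePaths (G : SimpleGraph V) (L : List (List V)) : Prop :=
  ∀ l ∈ L, l.IsChain G.Adj ∧ l.Nodup ∧ 2 ≤ l.length

/-- `l` belongs to `L` up to reversal. -/
def MemRev (l : List V) (L : List (List V)) : Prop := l ∈ L ∨ l.reverse ∈ L

/-- Some path of `L` starts at `a` and reaches `u` through `b`. -/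
def Arc (u : V) (L : List (List V)) (a b : V) : Prop :=
  ∃ s t, (s ++ [b]).head? = some a ∧ MemRev (s ++ b :: u :: t) L

/-- Some path of `L` ends at `a` and avoids `u`. -/
def HasFreePath (u : V) (L : List (List V)) (a : V) : Prop :=
  ∃ l, l.head? = some a ∧ u ∉ l ∧ MemRev l L

theorem listEdges_append_cons (s t : List V) (b : V) :
    listEdges (s ++ b :: t) = listEdges (s ++ [b]) ++ listEdges (b :: t) := by
  induction s with
  | nil => simp [listEdges]
  | cons a s ih => cases s <;> simp_all [listEdges]

theorem listEdges_reverse_perm (l : List V) : (listEdges l.reverse).Perm (listEdges l) := by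
  induction l with
  | nil => simp
  | cons a l ih =>
    cases l with
    | nil => simp
    | cons b l =>
      have h : listEdges (a :: b :: l).reverse = listEdges (b :: l).reverse ++ [s(a, b)] := by
        rw [List.reverse_cons, List.reverse_cons, List.append_assoc, List.singleton_append,
          listEdges_append_cons]
        simp [listEdges, Sym2.eq_swap]
      rw [h, listEdges]
      exact List.perm_append_comm.trans (ih.cons _)

theorem listEnds_reverse_perm (l : List V) : (listEnds l.reverse).Perm (listEnds l) := by
  simpa [listEnds] using List.perm_append_comm

theorem listEdges_support {G : SimpleGraph V} {a b : V} (p : G.Walk a b) :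
    listEdges p.support = p.edges := by
  induction p with
  | nil => simp [listEdges]
  | cons h p ih =>
    rw [Walk.support_cons, Walk.edges_cons, ← ih]
    cases p <;> simp [listEdges]

theorem listEnds_support {G : SimpleGraph V} {a b : V} (p : G.Walk a b) :
    listEnds p.support = [a, b] := by
  have h1 : p.support.head? = some a := by cases p <;> simp
  have h2 : p.support.getLast? = some b := by
    rw [List.getLast?_eq_getLast_of_ne_nil p.support_ne_nil]; simp
  simp [listEnds, h1, h2]

theorem count_listEnds [DecidableEq V] {l : List V} (hn : l.Nodup) (h2 : 2 ≤ l.length) (a : V) :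
    (listEnds l).count a = if a ∈ listEnds l then 1 else 0 := by
  have : (listEnds l).Nodup := by
    match l, h2 with
    | x :: y :: t, _ =>
      have : (y :: t).getLast (by simp) ∈ y :: t := List.getLast_mem _
      simp only [listEnds, List.head?_cons, List.getLast?_cons_cons]
      rw [List.getLast?_eq_getLast_of_ne_nil (by simp)]
      simp only [List.nodup_cons] at hn
      simp only [Option.toList_some, List.singleton_append, List.nodup_cons, List.mem_singleton]
      refine ⟨fun h => hn.1 (h ▸ this), by simp⟩
  exact this.count

theorem count_flatMap_listEnds [DecidableEq V] {G : SimpleGraph V} {L : List (List V)}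
    (hL : ArePaths G L) (a : V) :
    (L.flatMap listEnds).count a = L.countP (fun l => decide (a ∈ listEnds l)) := by
  induction L with
  | nil => simp
  | cons l L ih =>
    have hl := hL l (by simp)
    rw [List.flatMap_cons, List.count_append, List.countP_cons,
      ih fun m hm => hL m (by simp [hm]), count_listEnds hl.2.1 hl.2.2]
    simp [add_comm]

theorem MemRev.prop {G : SimpleGraph V} {L : List (List V)} {l : List V}
    (hL : ArePaths G L) (h : MemRev l L) : l.IsChain G.Adj ∧ l.Nodup ∧ 2 ≤ l.length := by
  rcases h with h | h
  · exact hL l h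
  · have := hL _ h
    rw [List.isChain_reverse] at this
    simpa [G.adj_comm] using this

theorem MemRev.exists_perm [DecidableEq V] {L : List (List V)} {l : List V} (h : MemRev l L) :
    ∃ m L', (m = l ∨ m = l.reverse) ∧ L.Perm (m :: L') := by
  rcases h with h | h
  · exact ⟨_, _, .inl rfl, List.perm_cons_erase h⟩
  · exact ⟨_, _, .inr rfl, List.perm_cons_erase h⟩

theorem MemRev.of_perm_cons {L L' : List (List V)} {l m p : List V} (hp : L.Perm (m :: L'))
    (hm : m = l ∨ m = l.reverse) (h : MemRev p L) : p = l ∨ p = l.reverse ∨ MemRev p L' := by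
  unfold MemRev at *
  rw [hp.mem_iff, hp.mem_iff, List.mem_cons, List.mem_cons, List.reverse_eq_iff] at h
  rcases hm with rfl | rfl
  · tauto
  · rw [List.reverse_reverse] at h; tauto

/-- Replacing a path by a new one, up to reversal of the old one. -/
theorem exists_replace [DecidableEq V] {G : SimpleGraph V} {L : List (List V)} {l l' : List V}
    (hL : ArePaths G L) (h : MemRev l L)
    (hl' : l'.IsChain G.Adj ∧ l'.Nodup ∧ 2 ≤ l'.length) :
    ∃ L', ArePaths G (l' :: L') ∧ (l' :: L').length = L.length ∧
      (L.flatMap listEdges).Perm (listEdges l ++ L'.flatMap listEdges) ∧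
      (L.flatMap listEnds).Perm (listEnds l ++ L'.flatMap listEnds) ∧
      ∀ p, MemRev p L → p = l ∨ p = l.reverse ∨ MemRev p L' := by
  obtain ⟨m, L', hm, hp⟩ := h.exists_perm
  refine ⟨L', ?_, by simp [hp.length_eq], ?_, ?_, fun p => MemRev.of_perm_cons hp hm⟩
  · intro p hpm
    rcases List.mem_cons.1 hpm with rfl | hpm
    · exact hl'
    · exact hL p (hp.mem_iff.2 (by simp [hpm]))
  · refine (hp.flatMap_right _).trans ?_
    rw [List.flatMap_cons]
    refine List.Perm.append_right _ ?_
    rcases hm with rfl | rfl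
    exacts [.refl _, listEdges_reverse_perm _]
  · refine (hp.flatMap_right _).trans ?_
    rw [List.flatMap_cons]
    refine List.Perm.append_right _ ?_
    rcases hm with rfl | rfl
    exacts [.refl _, listEnds_reverse_perm _]

theorem eq_of_nodup_split {s t s' t' : List V} {u : V} (hn : (s ++ u :: t).Nodup)
    (h : s ++ u :: t = s' ++ u :: t') : s = s' ∧ t = t' := by
  have hn' := h ▸ hn
  rw [List.nodup_middle, List.nodup_cons] at hn hn'
  simp only [List.mem_append, not_or] at hn hn'
  rcases List.append_eq_append_iff.1 h with ⟨r, h1, h2⟩ | ⟨r, h1, h2⟩ <;> cases r <;> simp_all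

/-- Exchanging the edge `wu` of a path from `x` through `w` and `u` for the missing edge `xu`. -/
theorem exists_swap [DecidableEq V] {G : SimpleGraph V} {L : List (List V)} {u x w : V}
    (hL : ArePaths G L) (hux : G.Adj u x) (harc : Arc u L x w) :
    ∃ L₂, ArePaths G L₂ ∧ L₂.length = L.length ∧
      (s(u, w) :: L₂.flatMap listEdges).Perm (s(u, x) :: L.flatMap listEdges) ∧
      (x :: L₂.flatMap listEnds).Perm (w :: L.flatMap listEnds) ∧
      (∀ a b, a ≠ x → Arc u L a b → Arc u L₂ a b) ∧
      ∀ a, a ≠ x → HasFreePath u L a → HasFreePath u L₂ a := by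
  obtain ⟨s, t, hx, hmem⟩ := harc
  obtain ⟨hc, hn, -⟩ := hmem.prop hL
  have hn' : ((s ++ [w]) ++ u :: t).Nodup := by simpa using hn
  have hc' := List.isChain_append_cons_cons.1 hc
  have hl' : ((s ++ [w]).reverse ++ u :: t).IsChain G.Adj ∧
      ((s ++ [w]).reverse ++ u :: t).Nodup ∧ 2 ≤ ((s ++ [w]).reverse ++ u :: t).length := by
    refine ⟨?_, ?_, by simp; omega⟩
    · refine List.isChain_append.2 ⟨?_, hc'.2.2, ?_⟩
      · rw [List.isChain_reverse]; simpa [G.adj_comm] using hc'.1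
      · rw [List.getLast?_reverse, hx]
        simpa using hux.symm
    · exact (List.Perm.append_right _ (List.reverse_perm _)).nodup_iff.2 hn'
  obtain ⟨L', hg, hlen, hE, hD, hM⟩ := exists_replace hL hmem hl'
  have hlast : (s ++ w :: u :: t).getLast? = (u :: t).getLast? := by
    rw [List.getLast?_append_of_ne_nil _ (by simp), List.getLast?_cons_cons]
  obtain ⟨z, hz⟩ : ∃ z, (u :: t).getLast? = some z := ⟨_, List.getLast?_eq_some_getLast (by simp)⟩
  have hrev : MemRev ((u :: t).reverse ++ (s ++ [w]))
      (((s ++ [w]).reverse ++ u :: t) :: L') := .inr (by simp)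
  refine ⟨_, hg, hlen, ?_, ?_, ?_, ?_⟩
  · have e1 : listEdges (s ++ w :: u :: t) =
        listEdges (s ++ [w]) ++ s(w, u) :: listEdges (u :: t) := by
      rw [listEdges_append_cons]; simp [listEdges]
    obtain ⟨s', hs'⟩ : ∃ s', s ++ [w] = x :: s' := by
      cases s <;> simp_all
    have e2 : listEdges ((s ++ [w]).reverse ++ u :: t) =
        listEdges (s ++ [w]).reverse ++ s(x, u) :: listEdges (u :: t) := by
      rw [hs', List.reverse_cons, List.append_assoc, List.singleton_append,
        listEdges_append_cons]
      simp [listEdges]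
    rw [List.flatMap_cons, e2]
    rw [e1] at hE
    refine List.Perm.trans ?_ (hE.symm.cons _)
    have := listEdges_reverse_perm (s ++ [w])
    rw [Sym2.eq_swap (a := u) (b := w), Sym2.eq_swap (a := u) (b := x)]
    rw [← Multiset.coe_eq_coe] at this ⊢
    simp only [← Multiset.cons_coe, ← Multiset.coe_add] at this ⊢
    rw [this]
    simp only [Multiset.add_cons, Multiset.cons_add]
    rw [Multiset.cons_swap]
  · have e1 : listEnds (s ++ w :: u :: t) = [x, z] := by
      have : (s ++ w :: u :: t).head? = some x := by cases s <;> simp_all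
      simp [listEnds, hlast, hz, this]
    have e2 : listEnds ((s ++ [w]).reverse ++ u :: t) = [w, z] := by
      have : ((s ++ [w]).reverse ++ u :: t).getLast? = some z := by
        rw [List.getLast?_append_of_ne_nil _ (by simp), hz]
      simp only [listEnds, this]
      simp
    rw [List.flatMap_cons, e2]
    rw [e1] at hD
    exact (List.Perm.swap _ _ _).trans (hD.symm.cons _)
  · rintro a b hax ⟨s₁, t₁, ha, hm₁⟩
    rcases hM _ hm₁ with h | h | h
    · have := eq_of_nodup_split hn' (s' := s₁ ++ [b]) (t' := t₁) (by simpa using h.symm)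
      rw [this.1, ha] at hx
      exact absurd (Option.some.inj hx) hax
    · have := eq_of_nodup_split (s := t.reverse) (t := (s ++ [w]).reverse) (u := u)
        (s' := s₁ ++ [b]) (t' := t₁) (by
          have := List.nodup_reverse.2 hn'
          simpa using this) (by simpa using h.symm)
      refine ⟨s₁, s ++ [w], ha, ?_⟩
      have h1 : s₁ ++ b :: u :: (s ++ [w]) = (u :: t).reverse ++ (s ++ [w]) := by
        simp [this.1]
      rwa [h1]
    · exact ⟨s₁, t₁, ha, h.imp (by simp_all) (by simp_all)⟩
  · rintro a hax ⟨l, ha, hu, hm₁⟩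
    rcases hM _ hm₁ with h | h | h
    · exact absurd (by simp [h]) hu
    · exact absurd (by simp [h]) hu
    · exact ⟨l, ha, hu, h.imp (by simp_all) (by simp_all)⟩

/-- The missing edge `ux` can be appended to a path ending at `x` and avoiding `u`. -/
theorem exists_extend [DecidableEq V] {G : SimpleGraph V} {L : List (List V)} {u x : V}
    (hL : ArePaths G L) (hux : G.Adj u x) (hfree : HasFreePath u L x) :
    ∃ L₂, ArePaths G L₂ ∧ L₂.length = L.length ∧
      (L₂.flatMap listEdges).Perm (s(u, x) :: L.flatMap listEdges) ∧
      (x :: L₂.flatMap listEnds).Perm (u :: L.flatMap listEnds) := by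
  obtain ⟨l, hx, hu, hmem⟩ := hfree
  obtain ⟨hc, hn, h2⟩ := hmem.prop hL
  obtain ⟨r, rfl⟩ : ∃ r, l = x :: r := by cases l <;> simp_all
  have hl' : (u :: x :: r).IsChain G.Adj ∧ (u :: x :: r).Nodup ∧ 2 ≤ (u :: x :: r).length :=
    ⟨List.isChain_cons_cons.2 ⟨hux, hc⟩, List.nodup_cons.2 ⟨hu, hn⟩, by simp⟩
  obtain ⟨L', hg, hlen, hE, hD, -⟩ := exists_replace hL hmem hl'
  refine ⟨_, hg, hlen, ?_, ?_⟩
  · simpa [listEdges] using hE.symm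
  · obtain ⟨z, hz⟩ : ∃ z, (x :: r).getLast? = some z :=
      ⟨_, List.getLast?_eq_some_getLast (by simp)⟩
    have e1 : listEnds (x :: r) = [x, z] := by simp only [listEnds, hz]; simp
    have e2 : listEnds (u :: x :: r) = [u, z] := by
      simp only [listEnds, List.getLast?_cons_cons, hz]; simp
    rw [List.flatMap_cons, e2]
    rw [e1] at hD
    exact (List.Perm.swap _ _ _).trans (hD.symm.cons _)

theorem Arc.mem_edges {u a b : V} {L : List (List V)} (h : Arc u L a b) :
    ∃ m ∈ L, s(u, b) ∈ listEdges m := by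
  obtain ⟨s, t, -, hm⟩ := h
  have : s(u, b) ∈ listEdges (s ++ b :: u :: t) := by
    rw [listEdges_append_cons]; simp [listEdges, Sym2.eq_swap]
  rcases hm with hm | hm
  · exact ⟨_, hm, this⟩
  · exact ⟨_, hm, (listEdges_reverse_perm _).mem_iff.2 this⟩

theorem Arc.mem_flatMap {u a b : V} {L : List (List V)} (h : Arc u L a b) :
    s(u, b) ∈ L.flatMap listEdges :=
  List.mem_flatMap.2 h.mem_edges

/-- The missing edge can be added when a chain of swaps leads to a free path. -/
theorem exists_of_chain [DecidableEq V] {G : SimpleGraph V} {u : V} (T : List V) :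
    ∀ (x : V) (L : List (List V)), ArePaths G L → G.Adj u x →
      (s(u, x) :: L.flatMap listEdges).Nodup → (x :: T).IsChain (Arc u L) →
      HasFreePath u L ((x :: T).getLast (by simp)) →
      ∃ L₂, ArePaths G L₂ ∧ L₂.length = L.length ∧
        (L₂.flatMap listEdges).Perm (s(u, x) :: L.flatMap listEdges) ∧
        (x :: L₂.flatMap listEnds).Perm (u :: L.flatMap listEnds) := by
  induction T with
  | nil => exact fun x L hL hux _ _ hf => exists_extend hL hux (by simpa using hf)
  | cons w T ih =>
    intro x L hL hux hnd hch hf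
    rw [List.isChain_cons_cons] at hch
    obtain ⟨L₁, hL₁, hlen₁, hE₁, hD₁, harc, hfree⟩ := exists_swap hL hux hch.1
    have hx : ∀ y ∈ w :: T, y ≠ x := by
      have hin : ∀ a b, Arc u L a b → b ≠ x := by
        rintro a b hab rfl
        exact (List.nodup_cons.1 hnd).1 hab.mem_flatMap
      exact hch.2.induction (· ≠ x) _ (fun _ _ hab _ => hin _ _ hab)
        (by simpa using hin _ _ hch.1)
    have huw : G.Adj u w := by
      obtain ⟨s, t, -, hm⟩ := hch.1
      exact (List.isChain_append_cons_cons.1 (hm.prop hL).1).2.1.symm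
    obtain ⟨L₂, hL₂, hlen₂, hE₂, hD₂⟩ := ih w L₁ hL₁ huw (hE₁.nodup_iff.2 hnd)
      (hch.2.imp_of_mem_imp fun a b ha _ => harc a b (hx a ha))
      (hfree _ (hx _ (List.getLast_mem _)) (by simpa using hf))
    refine ⟨L₂, hL₂, hlen₂.trans hlen₁, hE₂.trans hE₁, ?_⟩
    refine (List.perm_cons w).1 ?_
    calc (w :: x :: L₂.flatMap listEnds).Perm (x :: w :: L₂.flatMap listEnds) := .swap ..
      _ |>.Perm (x :: u :: L₁.flatMap listEnds) := hD₂.cons x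
      _ |>.Perm (u :: x :: L₁.flatMap listEnds) := .swap ..
      _ |>.Perm (u :: w :: L.flatMap listEnds) := hD₁.cons u
      _ |>.Perm (w :: u :: L.flatMap listEnds) := .swap ..

theorem pairwise_disjoint {L : List (List V)} (h : (L.flatMap listEdges).Nodup) :
    L.Pairwise fun l m => ∀ e, e ∈ listEdges l → e ∉ listEdges m :=
  (List.nodup_flatMap.1 h).2.imp fun hd _ h1 h2 => hd h1 h2

theorem Arc.unique {G : SimpleGraph V} {u a a' b : V} {L : List (List V)} (hL : ArePaths G L)
    (hnd : (L.flatMap listEdges).Nodup) (h : Arc u L a b) (h' : Arc u L a' b) : a = a' := by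
  obtain ⟨s, t, ha, hm⟩ := h
  obtain ⟨s', t', ha', hm'⟩ := h'
  have key : ∀ s t : List V, MemRev (s ++ b :: u :: t) L →
      ∃ m ∈ L, s(u, b) ∈ listEdges m ∧ (m = s ++ b :: u :: t ∨ m = (s ++ b :: u :: t).reverse) := by
    intro s t hm
    have : s(u, b) ∈ listEdges (s ++ b :: u :: t) := by
      rw [listEdges_append_cons]; simp [listEdges, Sym2.eq_swap]
    rcases hm with hm | hm
    · exact ⟨_, hm, this, .inl rfl⟩
    · exact ⟨_, hm, (listEdges_reverse_perm _).mem_iff.2 this, .inr rfl⟩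
  obtain ⟨m, hmL, he, hms⟩ := key s t hm
  obtain ⟨m', hmL', he', hms'⟩ := key s' t' hm'
  have hmm : m = m' := by
    by_contra hne
    have : Std.Symm fun l m : List V => ∀ e, e ∈ listEdges l → e ∉ listEdges m :=
      ⟨fun _ _ h e h1 h2 => h e h2 h1⟩
    exact (pairwise_disjoint hnd).forall hmL hmL' hne _ he he'
  have hn := (hm.prop hL).2.1
  have hcases : s ++ b :: u :: t = s' ++ b :: u :: t' ∨
      s ++ b :: u :: t = (s' ++ b :: u :: t').reverse := by
    rcases hms with h | h <;> rcases hms' with h' | h' <;> rw [hmm, h'] at h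
    · exact .inl h.symm
    · exact .inr h.symm
    · exact .inr (by rw [h, List.reverse_reverse])
    · exact .inl (List.reverse_injective h).symm
  rcases hcases with h | h
  · obtain ⟨rfl, -⟩ := eq_of_nodup_split hn h
    exact Option.some.inj (ha.symm.trans ha')
  · have := eq_of_nodup_split hn (s' := t'.reverse ++ [u]) (t' := s'.reverse) (by simpa using h)
    rw [this.1] at hn
    simp [List.nodup_append] at hn

theorem exists_arc [DecidableEq V] {u x : V} {L : List (List V)} (hxu : x ≠ u)
    (hfree : ¬ HasFreePath u L x) {m : List V} (hm : m ∈ L) (hx : x ∈ listEnds m) :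
    ∃ b, s(u, b) ∈ listEdges m ∧ Arc u L x b := by
  obtain ⟨l, hl, hml, hp⟩ : ∃ l, l.head? = some x ∧ MemRev l L ∧
      (listEdges m).Perm (listEdges l) := by
    simp only [listEnds, List.mem_append, Option.mem_toList] at hx
    rcases hx with hx | hx
    · exact ⟨m, hx, .inl hm, .refl _⟩
    · exact ⟨m.reverse, by simpa using hx, .inr (by simpa using hm),
        (listEdges_reverse_perm m).symm⟩
  have hu : u ∈ l := by
    by_contra hu
    exact hfree ⟨l, hl, hu, hml⟩
  obtain ⟨s, t, rfl⟩ := List.append_of_mem hu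
  rcases List.eq_nil_or_concat' s with rfl | ⟨s, b, rfl⟩
  · simp at hl
    exact absurd hl.symm hxu
  · refine ⟨b, hp.mem_iff.2 ?_, s, t, ?_, by simpa using hml⟩
    · rw [List.append_assoc, List.singleton_append, listEdges_append_cons]
      simp [listEdges, Sym2.eq_swap]
    · cases s <;> simp_all

/-- If no path ending at `x` avoids `u`, the paths ending at `x` give distinct arcs out of `x`. -/
theorem countP_le_card [DecidableEq V] {u x : V} {L : List (List V)} (hxu : x ≠ u)
    (hnd : (L.flatMap listEdges).Nodup) (hfree : ¬ HasFreePath u L x) (A : Finset V)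
    (hA : ∀ b, Arc u L x b → b ∈ A) :
    L.countP (fun l => decide (x ∈ listEnds l)) ≤ A.card := by
  have hex : ∀ m : List V, ∃ b, m ∈ L.filter (fun l => decide (x ∈ listEnds l)) →
      s(u, b) ∈ listEdges m ∧ Arc u L x b := by
    intro m
    by_cases hm : m ∈ L.filter (fun l => decide (x ∈ listEnds l))
    · have := List.mem_filter.1 hm
      obtain ⟨b, hb⟩ := exists_arc hxu hfree this.1 (by simpa using this.2)
      exact ⟨b, fun _ => hb⟩
    · exact ⟨x, fun h => absurd h hm⟩
  choose f hf using hex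
  have hnodup : ((L.filter (fun l => decide (x ∈ listEnds l))).map f).Nodup := by
    refine List.pairwise_map.2 (((pairwise_disjoint hnd).filter _).imp_of_mem ?_)
    intro l m hl hm hd heq
    exact hd _ (hf l hl).1 (heq ▸ (hf m hm).1)
  rw [List.countP_eq_length_filter, ← List.length_map (f := f), ← List.toFinset_card_of_nodup hnodup]
  refine Finset.card_le_card fun b hb => ?_
  obtain ⟨m, hm, rfl⟩ := List.mem_map.1 (List.mem_toFinset.1 hb)
  exact hA _ (hf m hm).2

/-- A vertex with more path ends than there are neighbours of `u` without path ends leads to a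
free path along arcs. -/
theorem exists_reachable_free [DecidableEq V] {G : SimpleGraph V} {u v : V} {L : List (List V)}
    (hL : ArePaths G L) (huv : G.Adj u v) (hnd : (s(u, v) :: L.flatMap listEdges).Nodup)
    (h : {w | s(u, w) ∈ L.flatMap listEdges ∧
        L.countP (fun l => decide (w ∈ listEnds l)) = 0}.ncard <
      L.countP (fun l => decide (v ∈ listEnds l))) :
    ∃ y, Relation.ReflTransGen (Arc u L) v y ∧ HasFreePath u L y := by
  classical
  by_contra! hno
  obtain ⟨hv, hnd⟩ := List.nodup_cons.1 hnd
  have hfin : {w | s(u, w) ∈ L.flatMap listEdges}.Finite :=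
    ((L.flatMap listEdges).finite_toSet).preimage fun _ _ _ _ hab => Sym2.congr_right.1 hab
  let N := hfin.toFinset
  have hN : ∀ w, w ∈ N ↔ s(u, w) ∈ L.flatMap listEdges := fun w => by simp [N]
  let R := N.filter fun w => Relation.ReflTransGen (Arc u L) v w
  have hvR : v ∉ R := fun h => hv ((hN v).1 (Finset.mem_filter.1 h).1)
  let c : V → ℕ := fun x => L.countP (fun l => decide (x ∈ listEnds l))
  let A : V → Finset V := fun x => N.filter fun b => Arc u L x b
  have hreach : ∀ x ∈ insert v R, Relation.ReflTransGen (Arc u L) v x := by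
    intro x hx
    rcases Finset.mem_insert.1 hx with rfl | hx
    · exact .refl
    · exact (Finset.mem_filter.1 hx).2
  have hle : ∀ x ∈ insert v R, c x ≤ (A x).card := by
    intro x hx
    refine countP_le_card ?_ hnd (hno x (hreach x hx)) _ fun b hb =>
      Finset.mem_filter.2 ⟨(hN b).2 hb.mem_flatMap, hb⟩
    rcases Relation.ReflTransGen.cases_tail (hreach x hx) with rfl | ⟨y, -, s, t, -, hm⟩
    · exact huv.ne'
    · exact (List.isChain_append_cons_cons.1 (hm.prop hL).1).2.1.ne
  have hsum : ∑ x ∈ insert v R, c x ≤ R.card := by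
    refine (Finset.sum_le_sum hle).trans ?_
    rw [← Finset.card_biUnion]
    · refine Finset.card_le_card fun b hb => ?_
      obtain ⟨x, hx, hb⟩ := Finset.mem_biUnion.1 hb
      obtain ⟨hbN, hb⟩ := Finset.mem_filter.1 hb
      exact Finset.mem_filter.2 ⟨hbN, (hreach x hx).tail hb⟩
    · intro x _ y _ hxy
      refine Finset.disjoint_left.2 fun b hb hb' => hxy ?_
      exact (Finset.mem_filter.1 hb).2.unique hL hnd (Finset.mem_filter.1 hb').2
  rw [Finset.sum_insert hvR] at hsum
  have hcard : R.card ≤ ∑ x ∈ R, c x + (R.filter fun x => c x = 0).card := by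
    rw [Finset.card_filter (fun x => c x = 0), ← Finset.sum_add_distrib, Finset.card_eq_sum_ones]
    refine Finset.sum_le_sum fun x _ => ?_
    split <;> omega
  have hS : (R.filter fun x => c x = 0).card ≤ {w | s(u, w) ∈ L.flatMap listEdges ∧
      L.countP (fun l => decide (w ∈ listEnds l)) = 0}.ncard := by
    rw [← Set.ncard_coe_finset]
    refine Set.ncard_le_ncard (fun w hw => ?_) (hfin.subset fun w hw => hw.1)
    obtain ⟨hw, h0⟩ := Finset.mem_filter.1 (Finset.mem_coe.1 hw)
    exact ⟨(hN w).1 (Finset.mem_filter.1 hw).1, h0⟩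
  have : c v = L.countP (fun l => decide (v ∈ listEnds l)) := rfl
  omega

/-- The vertex sequences of the paths of a decomposition. -/
def supports {G : SimpleGraph V} (P : List (Σ a b : V, G.Walk a b)) : List (List V) :=
  P.map fun p => p.2.2.support

theorem supports_flatMap_listEdges {G : SimpleGraph V} (P : List (Σ a b : V, G.Walk a b)) :
    (supports P).flatMap listEdges = P.flatMap fun p => p.2.2.edges := by
  simp [supports, List.flatMap_map, listEdges_support]

theorem ends_eq_countP [DecidableEq V] {G : SimpleGraph V} (D : PathDecomp G) (x : V) :
    ends D x = (supports D.paths).countP fun l => decide (x ∈ listEnds l) := by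
  rw [ends, supports, List.countP_map, List.countP_eq_length_filter]
  congr 2
  ext p
  simp [listEnds_support, eq_comm]

theorem exists_supports_eq {G : SimpleGraph V} {L : List (List V)} (hL : ArePaths G L) :
    ∃ P : List (Σ a b : V, G.Walk a b), supports P = L := by
  induction L with
  | nil => exact ⟨[], rfl⟩
  | cons l L ih =>
    obtain ⟨P, hP⟩ := ih fun m hm => hL m (by simp [hm])
    obtain ⟨hc, -, h2⟩ := hL l (by simp)
    have hne : l ≠ [] := by rintro rfl; simp at h2
    exact ⟨⟨_, _, Walk.ofSupport l hne hc⟩ :: P, by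
      simpa [supports, Walk.support_ofSupport] using hP⟩

theorem exists_pathDecomp {G : SimpleGraph V} {L : List (List V)} (hL : ArePaths G L)
    (hnd : (L.flatMap listEdges).Nodup) (hcov : ∀ e ∈ G.edgeSet, e ∈ L.flatMap listEdges) :
    ∃ D : PathDecomp G, supports D.paths = L := by
  obtain ⟨P, rfl⟩ := exists_supports_eq hL
  have hP : ∀ p ∈ P, p.2.2.support ∈ supports P := fun p hp => List.mem_map.2 ⟨p, hp, rfl⟩
  refine ⟨⟨P, fun p hp => ?_, fun p hp => ?_, ?_, fun e he => ?_⟩, rfl⟩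
  · have := (hL _ (hP p hp)).2.2
    rw [Walk.length_support] at this
    omega
  · exact Walk.isPath_def _ |>.2 (hL _ (hP p hp)).2.1
  · have := List.pairwise_map.1 (pairwise_disjoint hnd)
    simpa only [listEdges_support] using this
  · have := hcov e he
    rw [supports_flatMap_listEdges] at this
    exact List.mem_flatMap.1 this

theorem arePaths_supports {G H : SimpleGraph V} (hle : H ≤ G) (D : PathDecomp H) :
    ArePaths G (supports D.paths) := by
  intro l hl
  obtain ⟨p, hp, rfl⟩ := List.mem_map.1 hl
  refine ⟨p.2.2.isChain_adj_support.imp fun _ _ h => hle h, (D.isPath p hp).support_nodup, ?_⟩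
  have := D.nontrivial p hp
  rw [Walk.length_support]
  omega

theorem nodup_edges {G : SimpleGraph V} (D : PathDecomp G) :
    ((supports D.paths).flatMap listEdges).Nodup := by
  rw [supports_flatMap_listEdges]
  exact List.nodup_flatMap.2 ⟨fun p hp => (D.isPath p hp).isTrail.edges_nodup,
    D.edgeDisjoint.imp fun h e h1 h2 => h e h1 h2⟩

theorem mem_edges_iff {G : SimpleGraph V} (D : PathDecomp G) (e : Sym2 V) :
    e ∈ (supports D.paths).flatMap listEdges ↔ e ∈ G.edgeSet := by
  rw [supports_flatMap_listEdges, List.mem_flatMap]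
  exact ⟨fun ⟨p, _, he⟩ => p.2.2.edges_subset_edgeSet he, D.covers e⟩

end FanAddible

open FanAddible in
theorem fan_addible_lemma [DecidableEq V] (G : SimpleGraph V) (u v : V)
    (huv : G.Adj u v)
    (D' : PathDecomp (G.deleteEdges {s(u, v)}))
    (h : {w | (G.deleteEdges {s(u, v)}).Adj u w ∧ ends D' w = 0}.ncard < ends D' v) :
    ∃ D : PathDecomp G, pdCard D = pdCard D' ∧
      ends D u = ends D' u + 1 ∧ ends D v + 1 = ends D' v ∧
      ∀ x, x ≠ u → x ≠ v → ends D x = ends D' x := by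
  have hL := arePaths_supports (G.deleteEdges_le {s(u, v)}) D'
  have hnd : (s(u, v) :: (supports D'.paths).flatMap listEdges).Nodup :=
    List.nodup_cons.2 ⟨by rw [mem_edges_iff]; simp, nodup_edges D'⟩
  obtain ⟨y, hvy, hy⟩ := exists_reachable_free hL huv hnd (by
    simpa only [mem_edges_iff, mem_edgeSet, ← ends_eq_countP] using h)
  obtain ⟨T, hT, rfl⟩ := List.exists_isChain_cons_of_relationReflTransGen hvy
  obtain ⟨L, hLp, hlen, hE, hD⟩ := exists_of_chain T v _ hL huv hnd hT hy
  obtain ⟨D, rfl⟩ := exists_pathDecomp hLp (hE.nodup_iff.2 hnd) fun e he => by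
    rw [hE.mem_iff, List.mem_cons, mem_edges_iff, edgeSet_deleteEdges]
    by_cases h : e = s(u, v)
    · exact .inl h
    · exact .inr ⟨he, h⟩
  have hcount : ∀ x, ends D x + (if v = x then 1 else 0) =
      ends D' x + (if u = x then 1 else 0) := fun x => by
    have := hD.count_eq x
    rw [List.count_cons, List.count_cons, count_flatMap_listEnds hLp,
      count_flatMap_listEnds hL, ← ends_eq_countP, ← ends_eq_countP] at this
    simpa using this
  refine ⟨D, by simpa [supports, pdCard] using hlen, ?_, ?_, fun x hxu hxv => ?_⟩
  · simpa [huv.ne'] using hcount u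
  · simpa [huv.ne] using hcount v
  · simpa [hxu.symm, hxv.symm] using hcount x
end

section
/- Let u be a vertex of a graph G and let G' = G \ {ux_1,…,ux_h} where x_1,…,x_h are neighbors of u. Suppose D' is a path decomposition of G' with D'(v) ≥ 1 for every neighbor v of u in G. Then for any x ∈ {x_1,…,x_h} there is a subset A ⊆ {ux_1,…,ux_h} with ux ∈ A, |A| ≥ ⌈h/2⌉, and a path decomposition D of G' + A with |D| = |D'|, D(u) = D'(u) + |A|, D(x_i) = D'(x_i) − 1 for each ux_i ∈ A, and D(w) = D'(w) for all other vertices w. -/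
open SimpleGraph

variable {V : Type*}

/-- Reversing the part of a path from `u` beyond its first edge: `r` is the neighbour of `u` on `q`,
whose edge to `u` is exchanged for the edge to the other end of `q`. The flag `f` tells whether
the exchange is made. -/
theorem exists_flip_from [DecidableEq V] {u b : V} (q : (⊤ : SimpleGraph V).Walk u b)
    (hq : q.IsPath) :
    ∃ r : Option V, (∀ y, r = some y → s(u, y) ∈ q.edges) ∧
      ∀ (f : Prop) [Decidable f], (f → b ≠ u) →
        ∃ (c : V) (q' : (⊤ : SimpleGraph V).Walk u c), q'.IsPath ∧ q'.length = q.length ∧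
          (∀ v, v ∈ q'.support ↔ v ∈ q.support) ∧
          (q'.edges : Multiset (Sym2 V)) + (if f then r.elim 0 fun y => {s(u, y)} else 0) =
            q.edges + (if f then {s(u, b)} else 0) ∧
          ({c} : Multiset V) + (if f then {b} else 0) =
            {b} + (if f then r.elim {u} fun y => {y} else 0) := by
  cases q with
  | nil =>
    refine ⟨none, by simp, fun f _ hf => ⟨u, .nil, by simp, rfl, by simp, ?_, ?_⟩⟩ <;>
    simp_all
  | @cons _ y _ h q =>
    rw [Walk.cons_isPath_iff] at hq
    refine ⟨some y, by simp, fun f _ hf => ?_⟩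
    by_cases hf' : f
    · refine ⟨y, .cons (v := b) (by simpa using (hf hf').symm) q.reverse, ?_, by simp, by simp,
        ?_, ?_⟩
      · rw [Walk.cons_isPath_iff]
        simpa using hq
      · simp only [Walk.edges_cons, Walk.edges_reverse, hf', if_true, Option.elim_some,
          ← Multiset.cons_coe, Multiset.coe_reverse, ← Multiset.singleton_add]
        abel
      · simp [hf', add_comm]
    · exact ⟨b, .cons h q, by rwa [Walk.cons_isPath_iff], rfl, by simp, by simp [hf'], by simp [hf']⟩

theorem isPath_reverse_append {G : SimpleGraph V} {u a b : V} (p : G.Walk u a) (q : G.Walk u b) :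
    (p.reverse.append q).IsPath ↔
      p.IsPath ∧ q.IsPath ∧ ∀ v ∈ p.support, v ∈ q.support → v = u := by
  have hq := q.cons_tail_support.symm
  simp only [Walk.isPath_def, Walk.support_append, Walk.support_reverse, List.nodup_append',
    List.nodup_reverse, List.disjoint_reverse_left]
  rw [hq]
  simp only [List.nodup_cons, List.tail_cons, List.Disjoint]
  have hu := p.start_mem_support
  grind

/-- Rerouting a path through `u` at either of its ends. The neighbours of `u` towards the two ends
are `l` and `r`; an end for which the flag is set becomes adjacent to `u`, and the edge from `u`
to the corresponding neighbour, if any, is given up. -/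
theorem exists_flip [DecidableEq V] {u a b : V} (p : (⊤ : SimpleGraph V).Walk a b)
    (hp : p.IsPath) (hlen : 0 < p.length) :
    ∃ l r : Option V, (∀ y, l = some y → s(u, y) ∈ p.edges) ∧
      (∀ y, r = some y → s(u, y) ∈ p.edges) ∧ (∀ y, l = some y → r ≠ some y) ∧
      ∀ (f g : Prop) [Decidable f] [Decidable g], (f → a ≠ u) → (g → b ≠ u) →
        (f → g → l = none → r ≠ none) →
        ∃ (c d : V) (q : (⊤ : SimpleGraph V).Walk c d), q.IsPath ∧ 0 < q.length ∧
          (q.edges : Multiset (Sym2 V)) + ((if f then l.elim 0 fun y => {s(u, y)} else 0) +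
              (if g then r.elim 0 fun y => {s(u, y)} else 0)) =
            p.edges + ((if f then {s(u, a)} else 0) + (if g then {s(u, b)} else 0)) ∧
          ({c} + {d} : Multiset V) + ((if f then {a} else 0) + (if g then {b} else 0)) =
            ({a} + {b}) + ((if f then l.elim {u} fun y => {y} else 0) +
              (if g then r.elim {u} fun y => {y} else 0)) := by
  by_cases hu : u ∈ p.support
  · obtain ⟨p₁, p₂, rfl⟩ : ∃ (p₁ : (⊤ : SimpleGraph V).Walk u a)
        (p₂ : (⊤ : SimpleGraph V).Walk u b), p = p₁.reverse.append p₂ :=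
      ⟨(p.takeUntil u hu).reverse, p.dropUntil u hu, by simp⟩
    have hp' := (isPath_reverse_append p₁ p₂).1 hp
    obtain ⟨l, hl, hl'⟩ := exists_flip_from p₁ hp'.1
    obtain ⟨r, hr, hr'⟩ := exists_flip_from p₂ hp'.2.1
    refine ⟨l, r, fun y hy => by simp [hl y hy], fun y hy => by simp [hr y hy], ?_, ?_⟩
    · intro y hy hy'
      have h := hp.isTrail.edges_nodup
      rw [Walk.edges_append, List.nodup_append'] at h
      exact h.2.2 (by simpa using hl y hy) (hr y hy')
    · intro f g _ _ hf hg _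
      obtain ⟨c, q₁, h₁, h₁l, h₁s, h₁e, h₁v⟩ := hl' f hf
      obtain ⟨d, q₂, h₂, h₂l, h₂s, h₂e, h₂v⟩ := hr' g hg
      refine ⟨c, d, q₁.reverse.append q₂, ?_, ?_, ?_, ?_⟩
      · rw [isPath_reverse_append]
        exact ⟨h₁, h₂, fun v hv hv' => hp'.2.2 v ((h₁s v).1 hv) ((h₂s v).1 hv')⟩
      · simpa [h₁l, h₂l] using hlen
      · simp only [Walk.edges_append, Walk.edges_reverse, ← Multiset.coe_add,
          Multiset.coe_reverse]
        rw [add_add_add_comm, h₁e, h₂e, add_add_add_comm]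
      · rw [add_add_add_comm, h₁v, h₂v, add_add_add_comm]
  · refine ⟨none, none, by simp, by simp, by simp, ?_⟩
    intro f g _ _ hf hg hfg
    by_cases hf' : f <;> by_cases hg' : g
    · simp_all
    · refine ⟨u, b, .cons (by simpa using (hf hf').symm) p, ?_, by simp, ?_, ?_⟩
      · rw [Walk.cons_isPath_iff]
        exact ⟨hp, hu⟩
      · simp [hf', hg', ← Multiset.singleton_add, ← Multiset.cons_coe, add_comm]
      · simp only [hf', hg', if_true, if_false, Option.elim_none]
        abel
    · refine ⟨a, u, p.concat (by simpa using hg hg'), hp.concat hu _, by simp, ?_, ?_⟩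
      · simp [hf', hg', Walk.edges_concat, List.concat_eq_append, ← Multiset.coe_add, Sym2.eq_swap]
      · simp only [hf', hg', if_true, if_false, Option.elim_none]
        abel
    · exact ⟨a, b, p, hp, hlen, by simp [hf', hg'], by simp [hf', hg']⟩

/-- A sum over an orbit of a partial injection, split into its starting point and the rest. -/
theorem sum_orbit {T M : Type*} [DecidableEq T] [AddCommMonoid M] (U : Finset T)
    (g : T → Option T) (a : T) (hg : ∀ t t' s, g t = some s → g t' = some s → t = t')
    (hga : ∀ t, g t ≠ some a) (hU : ∀ t, t ∈ U ↔ t = a ∨ ∃ t' ∈ U, g t' = some t) (φ : T → M) :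
    ∑ t ∈ U, φ t = φ a + ∑ t ∈ U, (g t).elim 0 φ := by
  rw [← Finset.add_sum_erase U φ ((hU a).2 (.inl rfl))]
  congr 1
  rw [← Finset.sum_filter_add_sum_filter_not U (fun t => (g t).isSome) fun t => (g t).elim 0 φ,
    Finset.sum_eq_zero (s := U.filter fun t => ¬(g t).isSome) (by simp +contextual), add_zero]
  symm
  refine Finset.sum_bij (fun t ht => (g t).get (Finset.mem_filter.1 ht).2) ?_ ?_ ?_ ?_
  · intro t ht
    exact Finset.mem_erase.2 ⟨fun h => hga t (by simp [← h]),
      (hU _).2 <| .inr ⟨t, (Finset.mem_filter.1 ht).1, by simp⟩⟩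
  · intro t ht t' ht' h
    exact hg t t' _ (Option.some_get _).symm (by rw [h]; simp)
  · intro s hs
    rw [Finset.mem_erase, hU] at hs
    obtain ⟨t, ht, hts⟩ := hs.2.resolve_left hs.1
    exact ⟨t, by simp [ht, hts], by simp [hts]⟩
  · intro t ht
    obtain ⟨s, hs⟩ := Option.isSome_iff_exists.1 (Finset.mem_filter.1 ht).2
    simp [hs]

/-- Orbits of a partial injection started at points outside its range. -/
theorem exists_orbits {T ι : Type*} [Fintype T] [DecidableEq T] (g : T → Option T)
    (a : ι → T) (ha : Function.Injective a)
    (hg : ∀ t t' s, g t = some s → g t' = some s → t = t') (hga : ∀ i t, g t ≠ some (a i)) :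
    ∃ (U : ι → Finset T) (z : ι → T), Pairwise (fun i j => Disjoint (U i) (U j)) ∧
      (∀ i, z i ∈ U i) ∧ (∀ i, ∀ t ∈ U i, g t = none ↔ t = z i) ∧
      (∀ i, ∀ t, t ∈ U i ↔ t = a i ∨ ∃ t' ∈ U i, g t' = some t) := by
  classical
  let R : T → T → Prop := fun s t => g s = some t
  let U : ι → Finset T := fun i => {t | Relation.ReflTransGen R (a i) t}
  have hU : ∀ i t, t ∈ U i ↔ t = a i ∨ ∃ t' ∈ U i, g t' = some t := by
    intro i t
    simp only [U, Finset.mem_filter, Finset.mem_univ, true_and]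
    rw [Relation.ReflTransGen.cases_tail_iff]
  have hz : ∀ i, ∃ z ∈ U i, ∀ t ∈ U i, g t = none ↔ t = z := by
    intro i
    have hcard : ((U i).filter fun t => (g t).isSome).card + 1 = (U i).card := by
      have h := sum_orbit (U i) g (a i) hg (hga i) (hU i) (fun _ => 1)
      have h' : ∀ t, ((g t).elim 0 fun _ => 1) = if (g t).isSome then 1 else 0 := by
        intro t
        cases g t <;> rfl
      simp only [h', Finset.sum_boole, Finset.sum_const, smul_eq_mul, mul_one, Nat.cast_id] at h
      omega
    have h1 : ((U i).filter fun t => g t = none).card = 1 := by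
      have := Finset.card_filter_add_card_filter_not (s := U i) (fun t => (g t).isSome)
      simp only [Bool.not_eq_true, Option.isSome_eq_false_iff, Option.isNone_iff_eq_none] at this
      omega
    obtain ⟨z, hz⟩ := Finset.card_eq_one.1 h1
    have hz' : ∀ t, t ∈ (U i).filter (fun t => g t = none) ↔ t = z := by simp [hz]
    simp only [Finset.mem_filter] at hz'
    exact ⟨z, ((hz' z).2 rfl).1, fun t ht => by rw [← hz']; simp [ht]⟩
  choose z hzU hz using hz
  refine ⟨U, z, ?_, hzU, hz, hU⟩
  intro i j hij
  rw [Finset.disjoint_left]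
  intro t ht
  have ht' : Relation.ReflTransGen R (a i) t := by simpa [U] using ht
  clear ht
  induction ht' with
  | refl =>
    rw [hU]
    rintro (h | ⟨t', -, h⟩)
    · exact hij (ha h)
    · exact hga i t' h
  | @tail s t _ hst ih =>
    intro h
    rw [hU] at h
    rcases h with rfl | ⟨t', ht', h⟩
    · exact hga j s hst
    · exact ih (hg t' s t h hst ▸ ht')

/-- A map with fibres of size at most two is injective on some set, containing a prescribed point,
of at least half the elements. -/
theorem exists_injOn_half {ι κ : Type*} [Fintype ι] [DecidableEq κ] (f : ι → κ)
    (hf : ∀ k, (Finset.univ.filter fun i => f i = k).card ≤ 2) (j : ι) :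
    ∃ A : Finset ι, j ∈ A ∧ Set.InjOn f A ∧ (Fintype.card ι + 1) / 2 ≤ A.card := by
  classical
  have hs : ∀ k ∈ Finset.univ.image f, ∃ i, f i = k ∧ (k = f j → i = j) := by
    intro k hk
    by_cases h : k = f j
    · exact ⟨j, h.symm, fun _ => rfl⟩
    · obtain ⟨i, -, hi⟩ := Finset.mem_image.1 hk
      exact ⟨i, hi, fun h' => absurd h' h⟩
  have : Nonempty ι := ⟨j⟩
  choose! s hs hsj using hs
  have hinj : Set.InjOn s (Finset.univ.image f : Finset κ) := fun k hk k' hk' h => by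
    rw [← hs k hk, ← hs k' hk', h]
  refine ⟨(Finset.univ.image f).image s, ?_, ?_, ?_⟩
  · exact Finset.mem_image.2 ⟨f j, by simp, hsj _ (by simp) rfl⟩
  · intro i hi i' hi' h
    obtain ⟨k, hk, rfl⟩ := Finset.mem_image.1 hi
    obtain ⟨k', hk', rfl⟩ := Finset.mem_image.1 hi'
    rw [hs k hk, hs k' hk'] at h
    rw [h]
  · rw [Finset.card_image_of_injOn hinj]
    have := Finset.card_le_mul_card_image (f := f) Finset.univ 2 (fun k _ => hf k)
    rw [Finset.card_univ] at this
    omega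

theorem length_filter_ends [DecidableEq V] {G : SimpleGraph V} (l : List (Σ a b : V, G.Walk a b))
    (hne : ∀ p ∈ l, p.1 ≠ p.2.1) (w : V) :
    (l.filter fun p => p.1 = w ∨ p.2.1 = w).length =
      ∑ k : Fin l.length, Multiset.count w ({l[k].1} + {l[k].2.1}) := by
  rw [← List.countP_eq_length_filter]
  induction l with
  | nil => simp
  | cons p l ih =>
    rw [List.countP_cons, ih fun q hq => hne q (by simp [hq])]
    have hp := hne p (by simp)
    simp only [List.length_cons, Fin.sum_univ_succ]
    rw [add_comm]
    congr 1
    simp only [Multiset.count_add, Multiset.count_singleton, Fin.getElem_fin, Fin.val_zero,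
      List.getElem_cons_zero]
    grind

theorem ends_eq_count [DecidableEq V] {G : SimpleGraph V} (D : PathDecomp G) (w : V) :
    ends D w = (∑ k : Fin D.paths.length,
      ({D.paths[k].1} + {D.paths[k].2.1} : Multiset V)).count w := by
  rw [ends, Multiset.count_sum']
  refine length_filter_ends _ ?_ w
  rintro ⟨a, b, p⟩ hp (h : a = b)
  subst h
  exact (D.nontrivial _ hp).ne'
    (Walk.length_eq_zero_iff.2 (Walk.isPath_iff_nil.1 (D.isPath _ hp)))

theorem nodup_sum_iff {ι α : Type*} [Fintype ι] (f : ι → Multiset α) :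
    (∑ k, f k).Nodup ↔ (∀ k, (f k).Nodup) ∧ ∀ k k' e, e ∈ f k → e ∈ f k' → k = k' := by
  classical
  simp only [Multiset.nodup_iff_count_le_one, Multiset.count_sum']
  constructor
  · intro h
    refine ⟨fun k e => (Finset.single_le_sum (f := fun k => (f k).count e) (by simp)
      (Finset.mem_univ k)).trans (h e), fun k k' e hk hk' => ?_⟩
    by_contra hne
    have h1 := Multiset.one_le_count_iff_mem.2 hk
    have h2 := Multiset.one_le_count_iff_mem.2 hk'
    have h3 := Finset.sum_le_sum_of_subset (f := fun k => (f k).count e)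
      (Finset.subset_univ {k, k'})
    rw [Finset.sum_pair hne] at h3
    have := h e
    omega
  · rintro ⟨h, h'⟩ e
    by_cases he : ∃ k, e ∈ f k
    · obtain ⟨k, hk⟩ := he
      rw [Finset.sum_eq_single k]
      · exact h k e
      · intro k' _ hne
        exact Multiset.count_eq_zero.2 fun hk' => hne (h' k' k e hk' hk)
      · simp
    · push Not at he
      simp [Multiset.count_eq_zero.2 (he _)]

theorem PathDecomp.nodup_edges {G : SimpleGraph V} (D : PathDecomp G) :
    (∑ k : Fin D.paths.length, (D.paths[k].2.2.edges : Multiset (Sym2 V))).Nodup := by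
  rw [nodup_sum_iff]
  refine ⟨fun k => (D.isPath _ (List.getElem_mem _)).isTrail.edges_nodup, fun k k' e hk hk' => ?_⟩
  have h := List.pairwise_iff_getElem.1 D.edgeDisjoint
  simp only [Multiset.mem_coe] at hk hk'
  rcases lt_trichotomy k k' with hlt | heq | hgt
  · exact absurd hk' (h k k' k.2 k'.2 hlt e hk)
  · exact heq
  · exact absurd hk (h k' k k'.2 k.2 hgt e hk')

theorem PathDecomp.mem_edges_iff {G : SimpleGraph V} (D : PathDecomp G) (e : Sym2 V) :
    e ∈ (∑ k : Fin D.paths.length, (D.paths[k].2.2.edges : Multiset (Sym2 V))) ↔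
      e ∈ G.edgeSet := by
  simp only [Multiset.mem_sum, Finset.mem_univ, true_and, Multiset.mem_coe]
  constructor
  · rintro ⟨k, hk⟩
    exact Walk.edges_subset_edgeSet _ hk
  · intro he
    obtain ⟨p, hp, he⟩ := D.covers e he
    obtain ⟨k, hk, rfl⟩ := List.getElem_of_mem hp
    exact ⟨⟨k, hk⟩, he⟩

/-- Assemble a path decomposition from paths whose edges are, without repetition, those of `H`. -/
theorem exists_pathDecomp [DecidableEq V] (H : SimpleGraph V) {n : ℕ} (c d : Fin n → V)
    (q : ∀ k, (⊤ : SimpleGraph V).Walk (c k) (d k)) (hq : ∀ k, (q k).IsPath)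
    (hlen : ∀ k, 0 < (q k).length)
    (hnd : (∑ k, ((q k).edges : Multiset (Sym2 V))).Nodup)
    (hmem : ∀ e, e ∈ ∑ k, ((q k).edges : Multiset (Sym2 V)) ↔ e ∈ H.edgeSet) :
    ∃ D : PathDecomp H, pdCard D = n ∧
      ∀ w, ends D w = (∑ k, ({c k} + {d k} : Multiset V)).count w := by
  simp only [Multiset.mem_sum, Finset.mem_univ, true_and, Multiset.mem_coe] at hmem
  have hH : ∀ k, ∀ e ∈ (q k).edges, e ∈ H.edgeSet := fun k e he => (hmem e).1 ⟨k, he⟩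
  let P : Fin n → Σ a b : V, H.Walk a b := fun k => ⟨c k, d k, (q k).transfer H (hH k)⟩
  let D : PathDecomp H :=
    { paths := List.ofFn P
      nontrivial := by
        simp only [List.forall_mem_ofFn_iff]
        intro k
        simpa [P] using hlen k
      isPath := by
        simp only [List.forall_mem_ofFn_iff]
        exact fun k => (hq k).transfer _
      edgeDisjoint := by
        rw [List.pairwise_ofFn]
        intro k k' hlt e he he'
        simp only [P, Walk.edges_transfer] at he he'
        exact hlt.ne (((nodup_sum_iff _).1 hnd).2 k k' e he he')
      covers := by
        intro e he
        obtain ⟨k, hk⟩ := (hmem e).2 he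
        exact ⟨P k, by simp, by simpa [P] using hk⟩ }
  have hD : D.paths.length = n := List.length_ofFn
  refine ⟨D, hD, fun w => ?_⟩
  rw [ends_eq_count]
  congr 1
  refine Fintype.sum_equiv (finCongr hD) _ _ fun k => ?_
  have hk : D.paths[k] = P (Fin.cast hD k) := List.getElem_ofFn ..
  exact congrArg (fun p : Σ a b, H.Walk a b => ({p.1} + {p.2.1} : Multiset V)) hk

theorem fan_addible_set_lemma [DecidableEq V] (G : SimpleGraph V) (u : V)
    (m : ℕ) (x : Fin m → V) (hinj : Function.Injective x)
    (hadj : ∀ i, G.Adj u (x i))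
    (D' : PathDecomp (G.deleteEdges {e | ∃ i, e = s(u, x i)}))
    (hD' : ∀ w, G.Adj u w → 1 ≤ ends D' w) :
    ∀ j : Fin m, ∃ A : Finset (Fin m), j ∈ A ∧ (m + 1) / 2 ≤ A.card ∧
      ∃ D : PathDecomp (G.deleteEdges {e | ∃ i ∉ A, e = s(u, x i)}),
        pdCard D = pdCard D' ∧ ends D u = ends D' u + A.card ∧
        (∀ i ∈ A, ends D (x i) + 1 = ends D' (x i)) ∧
        ∀ w, w ≠ u → (∀ i ∈ A, w ≠ x i) → ends D w = ends D' w := by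
  intro j
  let T := Fin D'.paths.length × Bool
  let head : T → V := fun t => if t.2 then D'.paths[t.1].1 else D'.paths[t.1].2.1
  -- the two neighbours of `u` on each path, together with the rerouted paths
  have hflip := fun k : Fin D'.paths.length =>
    exists_flip (u := u) (D'.paths[k].2.2.mapLe le_top)
      (by simpa using D'.isPath _ (List.getElem_mem _))
      (by simpa using D'.nontrivial _ (List.getElem_mem _))
  simp only [Walk.edges_mapLe_eq_edges] at hflip
  choose l r hl hr hlr hflip using hflip
  let pre : T → Option V := fun t => if t.2 then l t.1 else r t.1
  have hpre_mem : ∀ t y, pre t = some y → s(u, y) ∈ D'.paths[t.1].2.2.edges := by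
    rintro ⟨k, _ | _⟩ y h
    · exact hr k y h
    · exact hl k y h
  have hpre_adj : ∀ t y, pre t = some y → G.Adj u y ∧ ∀ i, y ≠ x i := by
    intro t y h
    have := Walk.edges_subset_edgeSet _ (hpre_mem t y h)
    simp only [edgeSet_deleteEdges, Set.mem_sdiff, mem_edgeSet, Set.mem_ofPred_eq, not_exists,
      Sym2.congr_right] at this
    exact this
  have hpre_inj : ∀ t t' y, pre t = some y → pre t' = some y → t = t' := by
    rintro ⟨k, s⟩ ⟨k', s'⟩ y h h'
    obtain rfl : k = k' :=
      ((nodup_sum_iff _).1 D'.nodup_edges).2 k k' _ (hpre_mem _ _ h) (hpre_mem _ _ h')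
    cases s <;> cases s'
    · rfl
    · exact absurd h (hlr k y h')
    · exact absurd h' (hlr k y h)
    · rfl
  -- a chosen path end at each neighbour of `u`
  have hτ : ∀ w, G.Adj u w → ∃ t, head t = w := by
    intro w hw
    have h := hD' w hw
    rw [ends_eq_count, Multiset.one_le_count_iff_mem, Multiset.mem_sum] at h
    obtain ⟨k, -, hk⟩ := h
    rw [Multiset.mem_add, Multiset.mem_singleton, Multiset.mem_singleton] at hk
    rcases hk with hk | hk
    · exact ⟨(k, true), hk.symm⟩
    · exact ⟨(k, false), hk.symm⟩
  have : Nonempty T := ⟨(hτ _ (hadj j)).choose⟩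
  choose! τ hτ using hτ
  let g : T → Option T := fun t => (pre t).map τ
  have hg_some : ∀ t s, g t = some s ↔ ∃ y, pre t = some y ∧ τ y = s := by
    simp [g, Option.map_eq_some_iff]
  have hτ_inj : ∀ v w, G.Adj u v → G.Adj u w → τ v = τ w → v = w := by
    intro v w hv hw h
    rw [← hτ v hv, ← hτ w hw, h]
  have hg_inj : ∀ t t' s, g t = some s → g t' = some s → t = t' := by
    intro t t' s h h'
    obtain ⟨y, hy, rfl⟩ := (hg_some _ _).1 h
    obtain ⟨y', hy', hyy⟩ := (hg_some _ _).1 h'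
    obtain rfl := hτ_inj _ _ (hpre_adj _ _ hy').1 (hpre_adj _ _ hy).1 hyy
    exact hpre_inj t t' _ hy hy'
  have hg_start : ∀ i t, g t ≠ some (τ (x i)) := by
    intro i t h
    obtain ⟨y, hy, hyx⟩ := (hg_some _ _).1 h
    exact (hpre_adj _ _ hy).2 i (hτ_inj _ _ (hpre_adj _ _ hy).1 (hadj i) hyx)
  obtain ⟨U, z, hdisj, hzU, hz, hU⟩ := exists_orbits g (fun i => τ (x i))
    (fun i i' h => hinj (hτ_inj _ _ (hadj i) (hadj i') h)) hg_inj hg_start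
  have hz_inj : Function.Injective z := fun i i' h => by
    by_contra hne
    exact Finset.disjoint_left.1 (hdisj hne) (hzU i) (h ▸ hzU i')
  have hpre_none : ∀ t, g t = none ↔ pre t = none := by simp [g]
  obtain ⟨A, hjA, hA_inj, hA_card⟩ := exists_injOn_half (fun i => (z i).1)
    (by
      intro k
      have h := Finset.card_le_card_of_injOn (s := Finset.univ.filter fun i => (z i).1 = k)
        (t := (Finset.univ : Finset Bool)) (fun i => (z i).2) (fun _ _ => Finset.mem_univ _)
        (by
          intro i hi i' hi' h
          simp only [Finset.coe_filter, Finset.mem_univ, true_and, Set.mem_ofPred_eq] at hi hi'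
          exact hz_inj (Prod.ext (hi.trans hi'.symm) h))
      simpa using h) j
  rw [Fintype.card_fin] at hA_card
  refine ⟨A, hjA, hA_card, ?_⟩
  let F : Finset T := A.biUnion U
  have hF_head : ∀ t ∈ F, head t ≠ u := by
    intro t ht
    obtain ⟨i, -, ht⟩ := Finset.mem_biUnion.1 ht
    rcases (hU i t).1 ht with rfl | ⟨t', -, h⟩
    · rw [hτ _ (hadj i)]
      exact (hadj i).ne'
    · obtain ⟨y, hy, rfl⟩ := (hg_some _ _).1 h
      rw [hτ _ (hpre_adj _ _ hy).1]
      exact (hpre_adj _ _ hy).1.ne'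
  have hF_term : ∀ t ∈ F, pre t = none → ∃ i ∈ A, t = z i := by
    intro t ht h
    obtain ⟨i, hi, ht⟩ := Finset.mem_biUnion.1 ht
    exact ⟨i, hi, (hz i t ht).1 ((hpre_none t).2 h)⟩
  have hnew := fun k => hflip k ((k, true) ∈ F) ((k, false) ∈ F) (hF_head _) (hF_head _)
    (by
      intro h h' h0 h0'
      obtain ⟨i, hi, hik⟩ := hF_term _ h h0
      obtain ⟨i', hi', hik'⟩ := hF_term _ h' h0'
      obtain rfl := hA_inj hi hi' (by simp only [← hik, ← hik'])
      exact absurd (congrArg Prod.snd (hik.trans hik'.symm)) (by simp))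
  choose c d q hq hqlen hqe hqv using hnew
  -- sums over active path ends, grouped by path
  have hgroup : ∀ {α : Type _} (φ : T → Multiset α), ∑ i ∈ A, ∑ t ∈ U i, φ t =
      ∑ k, ((if (k, true) ∈ F then φ (k, true) else 0) +
        (if (k, false) ∈ F then φ (k, false) else 0)) := by
    intro α φ
    rw [← Finset.sum_biUnion fun i _ i' _ h => hdisj h, ← Finset.univ_inter (A.biUnion U),
      ← Finset.sum_ite_mem, Fintype.sum_prod_type]
    simp [F]
  have horbit : ∀ {α : Type _} (φ : V → Multiset α) (i : Fin m),
      ∑ t ∈ U i, φ (head t) = φ (x i) + ∑ t ∈ U i, (pre t).elim 0 φ := by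
    intro α φ i
    rw [sum_orbit (U i) g _ hg_inj (hg_start i) (hU i), hτ _ (hadj i)]
    congr 1
    refine Finset.sum_congr rfl fun t _ => ?_
    rcases h : pre t with _ | y
    · simp [g, h]
    · simp [g, h, hτ _ (hpre_adj t y h).1]
  have hE : ∑ k, ((q k).edges : Multiset (Sym2 V)) =
      ∑ k : Fin D'.paths.length, (D'.paths[k].2.2.edges : Multiset (Sym2 V)) +
        ∑ i ∈ A, {s(u, x i)} := by
    have h : ∑ k, ((q k).edges : Multiset (Sym2 V)) +
          ∑ i ∈ A, ∑ t ∈ U i, (pre t).elim 0 (fun y => {s(u, y)}) =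
        ∑ k : Fin D'.paths.length, (D'.paths[k].2.2.edges : Multiset (Sym2 V)) +
          ∑ i ∈ A, ∑ t ∈ U i, {s(u, head t)} := by
      rw [hgroup, hgroup, ← Finset.sum_add_distrib, ← Finset.sum_add_distrib]
      exact Finset.sum_congr rfl fun k _ => hqe k
    rw [Finset.sum_congr rfl fun i _ => horbit (fun y => {s(u, y)}) i, Finset.sum_add_distrib,
      ← add_assoc] at h
    exact add_right_cancel h
  have hW : ∑ k, ({c k} + {d k} : Multiset V) + ∑ i ∈ A, {x i} =
      ∑ k : Fin D'.paths.length, ({D'.paths[k].1} + {D'.paths[k].2.1} : Multiset V) +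
        A.card • {u} := by
    have h : ∑ k, ({c k} + {d k} : Multiset V) + ∑ i ∈ A, ∑ t ∈ U i, {head t} =
        ∑ k : Fin D'.paths.length, ({D'.paths[k].1} + {D'.paths[k].2.1} : Multiset V) +
          ∑ i ∈ A, ∑ t ∈ U i, (pre t).elim {u} (fun y => {y}) := by
      rw [hgroup, hgroup, ← Finset.sum_add_distrib, ← Finset.sum_add_distrib]
      exact Finset.sum_congr rfl fun k _ => hqv k
    have hpre : ∀ i, ∑ t ∈ U i, (pre t).elim {u} (fun y => ({y} : Multiset V)) =
        {u} + ∑ t ∈ U i, (pre t).elim 0 fun y => {y} := by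
      intro i
      rw [← Finset.add_sum_erase _ _ (hzU i), ← Finset.add_sum_erase (U i) _ (hzU i),
        (hpre_none _).1 ((hz i _ (hzU i)).2 rfl)]
      simp only [Option.elim_none, zero_add]
      congr 1
      refine Finset.sum_congr rfl fun t ht => ?_
      rw [Finset.mem_erase] at ht
      rcases h : pre t with _ | y
      · exact absurd ((hz i t ht.2).1 ((hpre_none t).2 h)) ht.1
      · rfl
    rw [Finset.sum_congr rfl fun i _ => horbit (fun y => {y}) i,
      Finset.sum_congr rfl fun i _ => hpre i, Finset.sum_add_distrib (s := A),
      Finset.sum_add_distrib (s := A), Finset.sum_const, ← add_assoc, ← add_assoc] at h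
    exact add_right_cancel h
  have hmem : ∀ e, e ∈ ∑ k, ((q k).edges : Multiset (Sym2 V)) ↔
      e ∈ (G.deleteEdges {e | ∃ i ∉ A, e = s(u, x i)}).edgeSet := by
    intro e
    rw [hE, Multiset.mem_add, D'.mem_edges_iff]
    simp only [edgeSet_deleteEdges, Set.mem_sdiff, Set.mem_ofPred_eq, Multiset.mem_sum,
      Multiset.mem_singleton, not_exists, not_and]
    constructor
    · rintro (⟨he, he'⟩ | ⟨i, hi, rfl⟩)
      · exact ⟨he, fun i _ => he' i⟩
      · refine ⟨hadj i, fun i' hi' h => hi' ?_⟩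
        rwa [← hinj (Sym2.congr_right.1 h)]
    · rintro ⟨he, he'⟩
      by_cases h : ∃ i, e = s(u, x i)
      · obtain ⟨i, hi⟩ := h
        exact .inr ⟨i, by_contra fun hiA => he' i hiA hi, hi⟩
      · exact .inl ⟨he, not_exists.1 h⟩
  have hnodup : (∑ k, ((q k).edges : Multiset (Sym2 V))).Nodup := by
    have hA : (∑ i ∈ A, ({s(u, x i)} : Multiset (Sym2 V))) = A.val.map fun i => s(u, x i) := by
      rw [Finset.sum, ← Multiset.sum_map_singleton (A.val.map fun i => s(u, x i)), Multiset.map_map]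
      rfl
    rw [hE, hA, Multiset.nodup_add]
    refine ⟨D'.nodup_edges, A.nodup.map fun i i' h => hinj (Sym2.congr_right.1 h), ?_⟩
    rw [Multiset.disjoint_left]
    intro e he he'
    obtain ⟨i, -, rfl⟩ := Multiset.mem_map.1 he'
    rw [D'.mem_edges_iff, edgeSet_deleteEdges] at he
    exact he.2 ⟨i, rfl⟩
  obtain ⟨D, hDcard, hDends⟩ := exists_pathDecomp _ c d q hq hqlen hnodup hmem
  have hends : ∀ w, ends D w + ∑ i ∈ A, (if w = x i then 1 else 0) =
      ends D' w + A.card * (if w = u then 1 else 0) := by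
    intro w
    have h := congrArg (Multiset.count w) hW
    rw [Multiset.count_add, Multiset.count_add, ← hDends, ← ends_eq_count, Multiset.count_sum',
      Multiset.count_nsmul] at h
    simpa only [Multiset.count_singleton] using h
  refine ⟨D, hDcard, ?_, fun i hi => ?_, fun w hw hw' => ?_⟩
  · simpa [(hadj _).ne] using hends u
  · simpa [(hadj i).ne', hinj.eq_iff, hi] using hends (x i)
  · simpa [hw, Finset.filter_eq_empty_iff.2 (fun i hi => hw' i hi)] using hends w
end

section
/- Let G be a graph and M = {u_1v_1, …, u_kv_k} an induced matching in G, and let D' be a path decomposition of G' = G \ M. If for each i the vertex u_i has no neighbor w in G' with D'(w) = 0 and D'(v_i) ≥ 1, then G admits a path decomposition D with |D| = |D'|, D(u_i) = D'(u_i)+1 and D(v_i) = D'(v_i)−1 for each i, and D(w) = D'(w) for every vertex w not incident to M. -/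
open SimpleGraph

variable {V : Type*}

/-- The edges between consecutive entries of a list of vertices. -/
def pathEdges : List V → List (Sym2 V)
  | [] => []
  | [_] => []
  | a :: b :: l => s(a, b) :: pathEdges (b :: l)

/-- The first and the last entry of a list of vertices. -/
def pathEnds (l : List V) : Multiset V := ↑(l.head?.toList ++ l.getLast?.toList)

/-- All edges of a family of vertex lists, with multiplicity. -/
def familyEdges (D : Multiset (List V)) : Multiset (Sym2 V) := D.bind fun l => ↑(pathEdges l)

/-- All ends of a family of vertex lists, with multiplicity. -/
def familyEnds (D : Multiset (List V)) : Multiset V := D.bind pathEnds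

theorem pathEdges_append_cons_cons (r s : List V) (y a : V) :
    pathEdges (r ++ y :: a :: s) = pathEdges (r ++ [y]) ++ s(y, a) :: pathEdges (a :: s) := by
  induction r with
  | nil => simp [pathEdges]
  | cons x r ih => cases r <;> simp_all [pathEdges]

theorem mem_pathEdges_append_cons {r : List V} {y : V} (hr : r.getLast? = some y) (a : V)
    (s : List V) : s(a, y) ∈ pathEdges (r ++ a :: s) := by
  obtain ⟨q, rfl⟩ := List.getLast?_eq_some_iff.1 hr
  rw [List.append_assoc, List.singleton_append, pathEdges_append_cons_cons]
  simp [Sym2.eq_swap]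

theorem coe_pathEdges_append_cons {r : List V} {y : V} (hr : r.getLast? = some y) (a : V)
    (s : List V) : (pathEdges (r ++ a :: s) : Multiset (Sym2 V)) =
      s(a, y) ::ₘ (↑(pathEdges r) + ↑(pathEdges (a :: s))) := by
  obtain ⟨q, rfl⟩ := List.getLast?_eq_some_iff.1 hr
  rw [List.append_assoc, List.singleton_append, pathEdges_append_cons_cons, ← Multiset.coe_add,
    ← Multiset.cons_coe, Multiset.add_cons, Sym2.eq_swap]

theorem pathEdges_reverse (l : List V) : pathEdges l.reverse = (pathEdges l).reverse := by
  induction l with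
  | nil => rfl
  | cons x l ih =>
    cases l with
    | nil => rfl
    | cons y l =>
      have h := pathEdges_append_cons_cons l.reverse [] y x
      simp_all [pathEdges, Sym2.eq_swap]

theorem pathEnds_reverse (l : List V) : pathEnds l.reverse = pathEnds l := by
  simp [pathEnds, ← Multiset.coe_add, add_comm]

theorem pathEnds_append_cons {r : List V} {x : V} (hr : r.head? = some x) (a : V) (s : List V) :
    pathEnds (r ++ a :: s) = x ::ₘ ↑(a :: s).getLast?.toList := by
  rw [pathEnds, List.head?_append, hr, List.getLast?_append_cons]
  rfl

theorem isChain_of_pathEdges_subset {G : SimpleGraph V} {l : List V}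
    (h : ∀ e ∈ pathEdges l, e ∈ G.edgeSet) : l.IsChain G.Adj := by
  induction l with
  | nil => simp
  | cons x l ih => cases l <;> simp_all [pathEdges]

theorem pathEdges_support {G : SimpleGraph V} {a b : V} (p : G.Walk a b) :
    pathEdges p.support = p.edges := by
  induction p with
  | nil => rfl
  | cons h p ih => cases p <;> simp_all [pathEdges]

theorem pathEnds_support {G : SimpleGraph V} {a b : V} (p : G.Walk a b) :
    pathEnds p.support = {a, b} := by
  rw [pathEnds, List.head?_eq_some_head p.support_ne_nil,
    List.getLast?_eq_some_getLast p.support_ne_nil]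
  simp [← Multiset.coe_singleton]

theorem familyEdges_cons (l : List V) (D : Multiset (List V)) :
    familyEdges (l ::ₘ D) = ↑(pathEdges l) + familyEdges D :=
  Multiset.cons_bind ..

theorem familyEnds_cons (l : List V) (D : Multiset (List V)) :
    familyEnds (l ::ₘ D) = pathEnds l + familyEnds D :=
  Multiset.cons_bind ..

theorem mem_familyEdges {D : Multiset (List V)} {e : Sym2 V} :
    e ∈ familyEdges D ↔ ∃ l ∈ D, e ∈ pathEdges l := by
  simp [familyEdges]

theorem mem_familyEnds {D : Multiset (List V)} {x : V} :
    x ∈ familyEnds D ↔ ∃ l, (l ∈ D ∨ l.reverse ∈ D) ∧ l.head? = some x := by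
  simp only [familyEnds, Multiset.mem_bind, pathEnds, Multiset.mem_coe, List.mem_append,
    Option.mem_toList]
  constructor
  · rintro ⟨l, hl, h | h⟩
    · exact ⟨l, .inl hl, h⟩
    · exact ⟨l.reverse, .inr (by simpa using hl), by simpa using h⟩
  · rintro ⟨l, hl | hl, h⟩
    · exact ⟨l, hl, .inl h⟩
    · exact ⟨l.reverse, hl, .inr (by simpa using h)⟩

theorem mem_familyEdges_of_append_cons {D : Multiset (List V)} {r s : List V} {a y : V}
    (hl : r ++ a :: s ∈ D ∨ (r ++ a :: s).reverse ∈ D) (hr : r.getLast? = some y) :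
    s(a, y) ∈ familyEdges D := by
  have hmem := mem_pathEdges_append_cons hr a s
  rcases hl with hl | hl
  · exact mem_familyEdges.2 ⟨_, hl, hmem⟩
  · exact mem_familyEdges.2 ⟨_, hl, by rwa [pathEdges_reverse, List.mem_reverse]⟩

/-- Some path of the family with end `z` either avoids `a` or, followed from `z`, enters `a` from
a vertex of `U`. -/
def HasLegInto (D : Multiset (List V)) (a : V) (U : Set V) (z : V) : Prop :=
  ∃ l, (l ∈ D ∨ l.reverse ∈ D) ∧ l.head? = some z ∧
    ∀ r s, l = r ++ a :: s → ∃ y ∈ U, r.getLast? = some y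

/-- Up to reversal, a path of the family can be split off. -/
theorem exists_family_split {D : Multiset (List V)} {l : List V} (h : l ∈ D ∨ l.reverse ∈ D) :
    ∃ D₀, (D = l ::ₘ D₀ ∨ D = l.reverse ::ₘ D₀) ∧ D.card = D₀.card + 1 ∧
      familyEdges D = ↑(pathEdges l) + familyEdges D₀ ∧
      familyEnds D = pathEnds l + familyEnds D₀ := by
  rcases h with h | h
  · obtain ⟨D₀, rfl⟩ := Multiset.exists_cons_of_mem h
    exact ⟨D₀, .inl rfl, by simp, familyEdges_cons .., familyEnds_cons ..⟩
  · obtain ⟨D₀, rfl⟩ := Multiset.exists_cons_of_mem h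
    refine ⟨D₀, .inr rfl, by simp, ?_, ?_⟩
    · rw [familyEdges_cons, pathEdges_reverse, ← Multiset.coe_reverse]; simp
    · rw [familyEnds_cons, pathEnds_reverse]

/-- Reversing the leg of a path from its end `x` to `a` does not affect the paths chosen at
vertices other than `x`. -/
theorem HasLegInto.reverse_leg {D₀ D : Multiset (List V)} {a x y z : V} {r s : List V} {U : Set V}
    (hD : D = (r ++ a :: s) ::ₘ D₀ ∨ D = (r ++ a :: s).reverse ::ₘ D₀)
    (hnodup : (r ++ a :: s).Nodup) (hrx : r.head? = some x) (hry : r.getLast? = some y)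
    (hy : s(a, y) ∉ familyEdges D₀) (hzx : z ≠ x) (hz : HasLegInto D a U z) :
    HasLegInto ((r.reverse ++ a :: s) ::ₘ D₀) a (U \ {y}) z := by
  obtain ⟨-, has, hdisj⟩ := List.nodup_append.1 hnodup
  have ha_s : a ∉ s := (List.nodup_cons.1 has).1
  have ha_r : a ∉ r := fun h => hdisj a h a (by simp) rfl
  obtain ⟨m, hmD, hmz, hm⟩ := hz
  have hm_cases : m = r ++ a :: s ∨ m = (r ++ a :: s).reverse ∨ (m ∈ D₀ ∨ m.reverse ∈ D₀) := by
    rcases hD with rfl | rfl <;> simp only [Multiset.mem_cons] at hmD <;>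
      rcases hmD with (h | h) | (h | h)
    · exact .inl h
    · exact .inr (.inr (.inl h))
    · exact .inr (.inl (List.reverse_eq_iff.1 h))
    · exact .inr (.inr (.inr h))
    · exact .inr (.inl h)
    · exact .inr (.inr (.inl h))
    · exact .inl (List.reverse_injective h)
    · exact .inr (.inr (.inr h))
  rcases hm_cases with rfl | rfl | hm₀
  · rw [List.head?_append, hrx] at hmz
    exact absurd (Option.some.inj hmz).symm hzx
  · refine ⟨(r.reverse ++ a :: s).reverse, .inr (by simp), ?_, ?_⟩
    · simpa [List.head?_append] using hmz
    · intro r' s' h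
      obtain ⟨y', hy', hr'⟩ := hm s.reverse r.reverse (by simp)
      have h' : s.reverse ++ a :: r = r' ++ a :: s' := by simpa using h
      obtain rfl : s.reverse = r' :=
        ((List.append_cons_inj_of_notMem (by simpa using ha_s) ha_r).1 h').1
      refine ⟨y', ⟨hy', ?_⟩, hr'⟩
      rintro rfl
      exact hdisj y' (List.mem_of_getLast? hry) y'
        (List.mem_cons_of_mem _ (by simpa using List.mem_of_getLast? hr')) rfl
  · refine ⟨m, hm₀.imp Multiset.mem_cons_of_mem Multiset.mem_cons_of_mem, hmz, ?_⟩
    rintro r' s' rfl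
    obtain ⟨y', hy', hr'⟩ := hm r' s' rfl
    refine ⟨y', ⟨hy', ?_⟩, hr'⟩
    rintro rfl
    exact hy (mem_familyEdges_of_append_cons hm₀ hr')

/-- Chain of leg reversals at `a`: as long as the path chosen at the far end `x` of the missing
edge `ax` runs through `a`, reverse its leg at `a`, which makes another edge at `a` missing. -/
theorem exists_family_add_edge_of_hasLegInto (a : V) {E : Multiset (Sym2 V)} (hE : E.Nodup)
    (T : Multiset V) {U : Set V} (hU : U.Finite) {x : V} {D : Multiset (List V)} (hx : x ∉ U)
    (hD : ∀ l ∈ D, l.Nodup ∧ 2 ≤ l.length) (hDE : s(a, x) ::ₘ familyEdges D = E)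
    (hDT : familyEnds D = x ::ₘ T) (hlegs : ∀ z ∈ insert x U, HasLegInto D a U z) :
    ∃ D₂ : Multiset (List V), D₂.card = D.card ∧ (∀ l ∈ D₂, l.Nodup ∧ 2 ≤ l.length) ∧
      familyEdges D₂ = E ∧ familyEnds D₂ = a ::ₘ T := by
  induction hn : U.ncard using Nat.strong_induction_on generalizing U x D with | _ n ih
  obtain ⟨l, hlD, hlx, hl⟩ := hlegs x (.inl rfl)
  have hl_path : l.Nodup ∧ 2 ≤ l.length := by
    rcases hlD with h | h
    · exact hD _ h
    · simpa using hD _ h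
  obtain ⟨D₀, hD₀, hcard, hedges, hends⟩ := exists_family_split hlD
  have hD₀_path : ∀ l ∈ D₀, l.Nodup ∧ 2 ≤ l.length := by
    intro m hm
    rcases hD₀ with rfl | rfl <;> exact hD _ (by simp [hm])
  rw [hends] at hDT
  by_cases ha : a ∈ l
  · obtain ⟨r, s, rfl⟩ := List.append_of_mem ha
    obtain ⟨y, hy, hry⟩ := hl r s rfl
    have hrx : r.head? = some x := by
      rw [List.head?_append_of_ne_nil _ (by rintro rfl; simp at hry)] at hlx
      exact hlx
    rw [hedges, coe_pathEdges_append_cons hry, Multiset.cons_add] at hDE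
    have hy_new : s(a, y) ∉ familyEdges D₀ := by
      rw [← hDE] at hE
      exact fun h => (Multiset.nodup_cons.1 (Multiset.nodup_cons.1 hE).2).1
        (Multiset.mem_add.2 (.inr h))
    rw [hcard, ← Multiset.card_cons (r.reverse ++ a :: s) D₀]
    refine ih _ ?_ hU.sdiff (x := y) (U := U \ {y}) (by simp) ?_ ?_ ?_ ?_ rfl
    · rw [← hn]
      exact Set.ncard_sdiff_singleton_lt_of_mem hy hU
    · intro m hm
      rcases Multiset.mem_cons.1 hm with rfl | hm
      · have hperm : (r ++ a :: s).Perm (r.reverse ++ a :: s) :=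
          (List.reverse_perm r).symm.append_right _
        exact ⟨hperm.nodup_iff.1 hl_path.1, hperm.length_eq ▸ hl_path.2⟩
      · exact hD₀_path m hm
    · rw [familyEdges_cons, coe_pathEdges_append_cons (y := x) (by simpa using hrx),
        pathEdges_reverse, Multiset.coe_reverse, Multiset.cons_add, Multiset.cons_swap, hDE]
    · rw [pathEnds_append_cons hrx, Multiset.cons_add, Multiset.cons_inj_right] at hDT
      rw [familyEnds_cons, pathEnds_append_cons (x := y) (by simpa using hry), Multiset.cons_add,
        hDT]
    · intro z hz
      have hzU : z ∈ U := by
        rcases hz with rfl | hz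
        · exact hy
        · exact hz.1
      exact (hlegs z (.inr hzU)).reverse_leg hD₀ hl_path.1 hrx hry hy_new
        (ne_of_mem_of_not_mem hzU hx)
  · obtain ⟨b, t, rfl⟩ : ∃ b t, l = b :: t :=
      List.exists_cons_of_ne_nil (by rintro rfl; simp at hlx)
    obtain rfl : b = x := by simpa using hlx
    refine ⟨(a :: b :: t) ::ₘ D₀, by simp [hcard], ?_, ?_, ?_⟩
    · intro m hm
      rcases Multiset.mem_cons.1 hm with rfl | hm
      · exact ⟨List.nodup_cons.2 ⟨ha, hl_path.1⟩, by simp⟩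
      · exact hD₀_path m hm
    · rw [familyEdges_cons, ← hDE, hedges]
      simp [pathEdges, ← Multiset.cons_coe]
    · rw [familyEnds_cons]
      simp only [pathEnds, List.head?_cons, Option.toList_some, List.singleton_append,
        ← Multiset.cons_coe, Multiset.cons_add, Multiset.cons_inj_right,
        List.getLast?_cons_cons] at hDT ⊢
      exact hDT

/-- An edge `ab` can be added to a family of paths with `b` replaced by `a` as an end. -/
theorem exists_family_add_edge {a b : V} (hab : a ≠ b) {D : Multiset (List V)}
    (hD : ∀ l ∈ D, l.Nodup ∧ 2 ≤ l.length) (hnodup : (s(a, b) ::ₘ familyEdges D).Nodup)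
    (hloop : s(a, a) ∉ familyEdges D)
    (hnbr : ∀ z, s(a, z) ∈ familyEdges D → z ∈ familyEnds D) (hb : b ∈ familyEnds D) :
    ∃ D₂ : Multiset (List V), D₂.card = D.card ∧ (∀ l ∈ D₂, l.Nodup ∧ 2 ≤ l.length) ∧
      familyEdges D₂ = s(a, b) ::ₘ familyEdges D ∧
      b ::ₘ familyEnds D₂ = a ::ₘ familyEnds D := by
  obtain ⟨T, hT⟩ := Multiset.exists_cons_of_mem hb
  have hfin : {y | s(a, y) ∈ familyEdges D}.Finite := by
    refine Set.Finite.preimage (f := fun y => s(a, y)) ?_ (Multiset.finite_toSet (familyEdges D))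
    intro y _ y' _ h
    exact Sym2.congr_right.1 h
  refine (exists_family_add_edge_of_hasLegInto a hnodup T hfin (Multiset.nodup_cons.1 hnodup).1 hD
    rfl hT fun z hz => ?_).imp fun D₂ ⟨hcard, hpath, hedges, hends⟩ =>
      ⟨hcard, hpath, hedges, by rw [hends, hT, Multiset.cons_swap]⟩
  have hza : z ≠ a := by
    rcases hz with rfl | hz
    · exact hab.symm
    · rintro rfl
      exact hloop hz
  obtain ⟨l, hl, hlz⟩ := mem_familyEnds.1 (show z ∈ familyEnds D by
    rcases hz with rfl | hz
    · exact hb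
    · exact hnbr z hz)
  refine ⟨l, hl, hlz, ?_⟩
  rintro r s rfl
  obtain rfl | ⟨q, y, rfl⟩ := List.eq_nil_or_concat' r
  · exact absurd (Option.some.inj hlz).symm hza
  · exact ⟨y, mem_familyEdges_of_append_cons hl (by simp), by simp⟩

/-- The family of vertex lists of a path decomposition. -/
def PathDecomp.family {G : SimpleGraph V} (D : PathDecomp G) : Multiset (List V) :=
  ↑(D.paths.map fun p => p.2.2.support)

theorem PathDecomp.nodup_of_mem_family {G : SimpleGraph V} (D : PathDecomp G) :
    ∀ l ∈ D.family, l.Nodup ∧ 2 ≤ l.length := by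
  intro l hl
  obtain ⟨p, hp, rfl⟩ : ∃ p ∈ D.paths, p.2.2.support = l := by
    simpa [PathDecomp.family] using hl
  have := D.nontrivial p hp
  exact ⟨(D.isPath p hp).support_nodup, by rw [Walk.length_support]; omega⟩

theorem PathDecomp.familyEdges_family {G : SimpleGraph V} (D : PathDecomp G) :
    familyEdges D.family = ↑(D.paths.flatMap fun p => p.2.2.edges) := by
  simp [familyEdges, PathDecomp.family, Multiset.coe_bind, List.flatMap_map, pathEdges_support]

theorem PathDecomp.nodup_familyEdges {G : SimpleGraph V} (D : PathDecomp G) :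
    (familyEdges D.family).Nodup := by
  rw [D.familyEdges_family, Multiset.coe_nodup, List.nodup_flatMap]
  exact ⟨fun p hp => (D.isPath p hp).isTrail.edges_nodup,
    D.edgeDisjoint.imp fun h e he he' => h e he he'⟩

theorem PathDecomp.mem_familyEdges_iff {G : SimpleGraph V} (D : PathDecomp G) (e : Sym2 V) :
    e ∈ familyEdges D.family ↔ e ∈ G.edgeSet := by
  rw [D.familyEdges_family, Multiset.mem_coe, List.mem_flatMap]
  exact ⟨fun ⟨p, _, he⟩ => p.2.2.edges_subset_edgeSet he, fun he => D.covers e he⟩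

theorem PathDecomp.count_familyEnds [DecidableEq V] {G : SimpleGraph V} (D : PathDecomp G)
    (w : V) : (familyEnds D.family).count w = ends D w := by
  have hne : ∀ p ∈ D.paths, p.1 ≠ p.2.1 := by
    rintro ⟨a, b, p⟩ hp hab
    obtain rfl : a = b := hab
    have h1 := D.nontrivial _ hp
    exact h1.ne' (Walk.length_eq_zero_iff.2 (Walk.isPath_iff_nil.1 (D.isPath _ hp)))
  unfold ends familyEnds PathDecomp.family
  revert hne
  induction D.paths with
  | nil => exact fun _ => rfl
  | cons p L ih =>
    intro hne
    have hp := hne p (by simp)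
    have ih := ih fun q hq => hne q (by simp [hq])
    rw [List.map_cons, ← Multiset.cons_coe, Multiset.cons_bind, Multiset.count_add, ih,
      pathEnds_support, List.filter_cons]
    simp only [Multiset.insert_eq_cons, Multiset.count_cons, Multiset.count_singleton]
    grind

theorem PathDecomp.exists_of_family {G : SimpleGraph V} {D : Multiset (List V)}
    (hD : ∀ l ∈ D, l.Nodup ∧ 2 ≤ l.length) (hnodup : (familyEdges D).Nodup)
    (hmem : ∀ e, e ∈ familyEdges D ↔ e ∈ G.edgeSet) :
    ∃ D₂ : PathDecomp G, D₂.family = D := by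
  obtain ⟨L, hL⟩ : ∃ L : List (Σ a b : V, G.Walk a b),
      L.map (fun p => p.2.2.support) = D.toList := by
    rw [← Set.mem_range, Set.range_list_map]
    intro l hl
    have hl := Multiset.mem_toList.1 hl
    have hne : l ≠ [] := by
      rintro rfl
      simpa using hD _ hl
    have hchain : l.IsChain G.Adj := isChain_of_pathEdges_subset fun e he =>
      (hmem e).1 (mem_familyEdges.2 ⟨l, hl, he⟩)
    exact ⟨⟨_, _, Walk.ofSupport l hne hchain⟩, Walk.support_ofSupport hne hchain⟩
  have hLD : (↑(L.map fun p => p.2.2.support) : Multiset (List V)) = D := by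
    rw [hL, Multiset.coe_toList]
  have hsupp : ∀ p ∈ L, p.2.2.support ∈ D := by
    intro p hp
    rw [← hLD]
    exact Multiset.mem_coe.2 (List.mem_map_of_mem hp)
  have hedges : familyEdges D = ↑(L.flatMap fun p => p.2.2.edges) := by
    rw [← hLD]
    simp [familyEdges, Multiset.coe_bind, List.flatMap_map, pathEdges_support]
  rw [hedges, Multiset.coe_nodup, List.nodup_flatMap] at hnodup
  refine ⟨⟨L, ?_, ?_, ?_, ?_⟩, hLD⟩
  · intro p hp
    have := (hD _ (hsupp p hp)).2
    rw [Walk.length_support] at this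
    omega
  · exact fun p hp => Walk.isPath_def _ |>.2 (hD _ (hsupp p hp)).1
  · exact hnodup.2.imp fun h e he he' => h he he'
  · intro e he
    rw [← hmem, hedges] at he
    simpa using he

theorem induced_matching_lemma [DecidableEq V] (G : SimpleGraph V) (k : ℕ)
    (u v : Fin k → V)
    (hinj : Function.Injective (Sum.elim u v : Fin k ⊕ Fin k → V))
    (hedge : ∀ i, G.Adj (u i) (v i))
    (hind : ∀ a b : V, (∃ i, a = u i ∨ a = v i) → (∃ i, b = u i ∨ b = v i) →
      G.Adj a b → ∃ i, (a = u i ∧ b = v i) ∨ (a = v i ∧ b = u i))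
    (D' : PathDecomp (G.deleteEdges {e | ∃ i, e = s(u i, v i)}))
    (h1 : ∀ i w, (G.deleteEdges {e | ∃ i, e = s(u i, v i)}).Adj (u i) w →
      ends D' w ≠ 0)
    (h2 : ∀ i, 1 ≤ ends D' (v i)) :
    ∃ D : PathDecomp G, pdCard D = pdCard D' ∧
      (∀ i, ends D (u i) = ends D' (u i) + 1) ∧
      (∀ i, ends D (v i) + 1 = ends D' (v i)) ∧
      ∀ w, (∀ i, w ≠ u i ∧ w ≠ v i) → ends D w = ends D' w := by
  have huv : ∀ i j, u i ≠ v j := fun i j h => by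
    simpa using @hinj (.inl i) (.inr j) h
  have hu : Function.Injective u := fun i j h => by
    simpa using @hinj (.inl i) (.inl j) h
  have hv : Function.Injective v := fun i j h => by
    simpa using @hinj (.inr i) (.inr j) h
  have hnodup : ∀ S : Finset (Fin k),
      (S.val.map (fun i => s(u i, v i)) + familyEdges D'.family).Nodup := by
    intro S
    rw [Multiset.nodup_add]
    refine ⟨S.nodup.map fun i i' h => ?_, D'.nodup_familyEdges, ?_⟩
    · rcases Sym2.eq_iff.1 h with h | h
      · exact hu h.1
      · exact absurd h.1 (huv _ _)
    · rw [Multiset.disjoint_left]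
      intro e he he'
      obtain ⟨i, -, rfl⟩ := Multiset.mem_map.1 he
      have := (D'.mem_familyEdges_iff _).1 he'
      rw [mem_edgeSet, deleteEdges_adj] at this
      exact this.2 ⟨i, rfl⟩
  have key : ∀ S : Finset (Fin k), ∃ D : Multiset (List V), D.card = D'.family.card ∧
      (∀ l ∈ D, l.Nodup ∧ 2 ≤ l.length) ∧
      familyEdges D = S.val.map (fun i => s(u i, v i)) + familyEdges D'.family ∧
      S.val.map v + familyEnds D = S.val.map u + familyEnds D'.family := by
    intro S
    induction S using Finset.induction_on with
    | empty => exact ⟨D'.family, rfl, D'.nodup_of_mem_family, by simp, by simp⟩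
    | insert j S hj ih =>
      obtain ⟨D, hcard, hpath, hedges, hends⟩ := ih
      have hmem_ends : ∀ z, (∀ i, z ≠ u i) → (∀ i ∈ S, z ≠ v i) → ends D' z ≠ 0 →
          z ∈ familyEnds D := by
        intro z hzu hzv hz
        have h : z ∈ S.val.map v + familyEnds D := by
          rw [hends]
          refine Multiset.mem_add.2 (.inr ?_)
          rwa [← Multiset.count_ne_zero, D'.count_familyEnds]
        rcases Multiset.mem_add.1 h with h | h
        · obtain ⟨i, hi, rfl⟩ := Multiset.mem_map.1 h
          exact absurd rfl (hzv i hi)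
        · exact h
      have hmem_edges : ∀ z, s(u j, z) ∈ familyEdges D →
          (G.deleteEdges {e | ∃ i, e = s(u i, v i)}).Adj (u j) z := by
        intro z hz
        rw [hedges] at hz
        rcases Multiset.mem_add.1 hz with h | h
        · obtain ⟨i, hi, h⟩ := Multiset.mem_map.1 h
          rcases Sym2.eq_iff.1 h with h | h
          · exact absurd (hu h.1 ▸ hi) hj
          · exact absurd h.2.symm (huv j i)
        · exact (D'.mem_familyEdges_iff _).1 h
      refine (exists_family_add_edge (huv j j) hpath ?_ ?_ ?_ ?_).imp
        fun D₂ ⟨hcard₂, hpath₂, hedges₂, hends₂⟩ => ⟨hcard₂.trans hcard, hpath₂, ?_, ?_⟩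
      · refine Multiset.nodup_cons.2 ⟨fun h => ?_, ?_⟩
        · have := hmem_edges _ h
          rw [deleteEdges_adj] at this
          exact this.2 ⟨j, rfl⟩
        · exact hedges ▸ hnodup S
      · exact fun h => (hmem_edges _ h).ne rfl
      · intro z hz
        have hadj := hmem_edges z hz
        have hGadj := (deleteEdges_adj.1 hadj)
        refine hmem_ends z ?_ ?_ (h1 j z hadj)
        · rintro i rfl
          obtain ⟨i', h | h⟩ := hind _ _ ⟨j, .inl rfl⟩ ⟨i, .inl rfl⟩ hGadj.1
          · exact huv _ _ h.2
          · exact huv _ _ h.1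
        · rintro i - rfl
          obtain ⟨i', h | h⟩ := hind _ _ ⟨j, .inl rfl⟩ ⟨i, .inr rfl⟩ hGadj.1
          · exact hGadj.2 ⟨i', by rw [h.1, h.2]⟩
          · exact huv _ _ h.1
      · refine hmem_ends _ (fun i h => huv i j h.symm) (fun i hi h => ?_)
          (Nat.one_le_iff_ne_zero.1 (h2 j))
        exact hj (hv h ▸ hi)
      · rw [hedges₂, hedges, Finset.insert_val_of_notMem hj, Multiset.map_cons,
          Multiset.cons_add]
      · rw [Finset.insert_val_of_notMem hj, Multiset.map_cons, Multiset.map_cons,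
          Multiset.cons_add, Multiset.cons_add, ← hends, ← Multiset.add_cons, hends₂,
          Multiset.add_cons]
  obtain ⟨D, hcard, hpath, hedges, hends⟩ := key Finset.univ
  have hmem : ∀ e, e ∈ familyEdges D ↔ e ∈ G.edgeSet := by
    intro e
    rw [hedges, Multiset.mem_add, D'.mem_familyEdges_iff, edgeSet_deleteEdges]
    simp only [Multiset.mem_map, Finset.mem_val, Finset.mem_univ, true_and, Set.mem_sdiff,
      Set.mem_ofPred_eq]
    constructor
    · rintro (⟨i, rfl⟩ | h)
      · exact hedge i
      · exact h.1
    · intro h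
      by_cases he : ∃ i, e = s(u i, v i)
      · exact .inl (he.imp fun i hi => hi.symm)
      · exact .inr ⟨h, he⟩
  obtain ⟨D₂, rfl⟩ := PathDecomp.exists_of_family hpath (hedges ▸ hnodup _) hmem
  have hcount : ∀ w, (Finset.univ.val.map v).count w + ends D₂ w =
      (Finset.univ.val.map u).count w + ends D' w := by
    intro w
    rw [← D₂.count_familyEnds, ← D'.count_familyEnds, ← Multiset.count_add, hends,
      Multiset.count_add]
  have hcount_self : ∀ {f : Fin k → V}, Function.Injective f → ∀ i,
      (Finset.univ.val.map f).count (f i) = 1 := fun {f} hf i =>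
    Multiset.count_eq_one_of_mem (Finset.univ.nodup.map hf)
      (Multiset.mem_map_of_mem f (Finset.mem_univ i))
  have hcount_zero : ∀ {f : Fin k → V} {w : V}, (∀ i, w ≠ f i) →
      (Finset.univ.val.map f).count w = 0 := fun hf =>
    Multiset.count_eq_zero.2 fun h => by
      obtain ⟨i, -, hi⟩ := Multiset.mem_map.1 h
      exact hf i hi.symm
  refine ⟨D₂, by simpa [PathDecomp.family, pdCard] using hcard, fun i => ?_, fun i => ?_,
    fun w hw => ?_⟩
  · have := hcount (u i)
    rw [hcount_self hu, hcount_zero (huv i)] at this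
    omega
  · have := hcount (v i)
    rw [hcount_self hv, hcount_zero fun j => (huv j i).symm] at this
    omega
  · have := hcount w
    rw [hcount_zero fun i => (hw i).1, hcount_zero fun i => (hw i).2] at this
    omega
end
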